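/- arXiv:1208.2210 — 4 statements merged into one kernel-verified Lean document; each statement's English description precedes it below -/
import Mathlib

section
/- For every complex number q with |q| < 1, with x(q) = (q; q^2)_∞ / (q^3; q^6)_∞^3, one has the 2-dissection 1/x(q)^2 = ( q^2 (q^2; q^2)_∞^2 (q^{12}; q^{12})_∞^6 / ((q^4; q^4)_∞^2 (q^6; q^6)_∞^6) + (q^4; q^4)_∞^6 / ((q^2; q^2)_∞^2 (q^6; q^6)_∞^2 (q^{12}; q^{12})_∞^2) ) + 2 q (q^4; q^4)_∞^2 (q^{12}; q^{12})_∞^2 / (q^6; q^6)_∞^4. -/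
/-- The q-shifted factorial `(a; q)_∞ = ∏_{n=0}^∞ (1 - a qⁿ)`. -/
noncomputable def qPoch (a q : ℂ) : ℂ := ∏' n : ℕ, (1 - a * q ^ n)

/-- `x(q) = (q; q²)_∞ / (q³; q⁶)_∞³`. -/
noncomputable def x (q : ℂ) : ℂ := qPoch q (q ^ 2) / qPoch (q ^ 3) (q ^ 6) ^ 3

open Filter Topology

lemma qp_summable (a p : ℂ) (hp : ‖p‖ < 1) : Summable (fun n : ℕ => ‖-(a * p ^ n)‖) := by
  simp only [norm_neg, norm_mul, norm_pow]
  exact (summable_geometric_of_lt_one (norm_nonneg _) hp).mul_left _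

lemma qp_multipliable (a p : ℂ) (hp : ‖p‖ < 1) : Multipliable (fun n : ℕ => 1 - a * p ^ n) := by
  simpa [sub_eq_add_neg] using multipliable_one_add_of_summable (qp_summable a p hp)

lemma qp_tendsto (a p : ℂ) (hp : ‖p‖ < 1) :
    Tendsto (fun N : ℕ => ∏ n ∈ Finset.range N, (1 - a * p ^ n)) atTop (𝓝 (qPoch a p)) :=
  (qp_multipliable a p hp).tendsto_prod_tprod_nat

lemma qp_ne_zero (a p : ℂ) (ha : ‖a‖ < 1) (hp : ‖p‖ < 1) : qPoch a p ≠ 0 := by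
  have h := tprod_one_add_ne_zero_of_summable (f := fun n : ℕ => -(a * p ^ n)) ?_
    (qp_summable a p hp)
  · simpa [qPoch, sub_eq_add_neg] using h
  · intro n h
    have h1 : a * p ^ n = 1 := by linear_combination -h
    have h2 : ‖a * p ^ n‖ < 1 := by
      rw [norm_mul, norm_pow]
      calc ‖a‖ * ‖p‖ ^ n ≤ ‖a‖ * 1 := by
            gcongr
            exact pow_le_one₀ (norm_nonneg _) hp.le
        _ < 1 := by simpa using ha
    rw [h1] at h2
    simp at h2

lemma qp_split (m : ℕ) (hm : m ≠ 0) (a p : ℂ) (hp : ‖p‖ < 1) :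
    qPoch a p = ∏ i ∈ Finset.range m, qPoch (a * p ^ i) (p ^ m) := by
  have hpm : ‖p ^ m‖ < 1 := by
    rw [norm_pow]; exact pow_lt_one₀ (norm_nonneg _) hp hm
  have h1 := tendsto_finsetProd (Finset.range m)
    (fun i _ => qp_tendsto (a * p ^ i) (p ^ m) hpm)
  have h2 : Tendsto (fun N : ℕ => m * N) atTop atTop :=
    tendsto_id.const_mul_atTop' (Nat.pos_of_ne_zero hm)
  have h3 := (qp_tendsto a p hp).comp h2
  refine tendsto_nhds_unique h3 (h1.congr fun N => ?_)
  simp only [Function.comp]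
  induction N with
  | zero => simp
  | succ N ih =>
    rw [Nat.mul_succ, Finset.prod_range_add, ← ih, ← Finset.prod_mul_distrib]
    refine Finset.prod_congr rfl fun i _ => ?_
    rw [Finset.prod_range_succ]
    congr 2
    ring

/-- Gaussian binomial coefficients. -/
noncomputable def gb (p : ℂ) : ℕ → ℕ → ℂ
  | _, 0 => 1
  | 0, _ + 1 => 0
  | N + 1, k + 1 => gb p N (k + 1) + p ^ (N - k) * gb p N k

lemma gb_n_zero (p : ℂ) (N : ℕ) : gb p N 0 = 1 := by cases N <;> rfl

lemma gb_succ (p : ℂ) (N k : ℕ) :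
    gb p (N + 1) (k + 1) = gb p N (k + 1) + p ^ (N - k) * gb p N k := rfl

lemma gb_eq_zero (p : ℂ) (N k : ℕ) (h : N < k) : gb p N k = 0 := by
  induction N generalizing k with
  | zero => cases k with
    | zero => omega
    | succ k => rfl
  | succ N ih => cases k with
    | zero => omega
    | succ k => rw [gb_succ, ih _ (by omega), ih _ (by omega)]; simp

lemma gb_binom (r y : ℂ) (N : ℕ) :
    ∏ j ∈ Finset.range N, (1 + y * (r ^ 2) ^ j) =
      ∑ k ∈ Finset.range (N + 1), gb (r ^ 2) N k * (r ^ (k * (k - 1)) * y ^ k) := by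
  induction N with
  | zero => simp [gb_n_zero]
  | succ N ih =>
    rw [Finset.prod_range_succ, ih, Finset.sum_range_succ' _ (N + 1)]
    have h1 : ∑ k ∈ Finset.range (N + 1), gb (r ^ 2) N k * (r ^ (k * (k - 1)) * y ^ k) =
        ∑ k ∈ Finset.range (N + 1),
          gb (r ^ 2) N (k + 1) * (r ^ ((k + 1) * (k + 1 - 1)) * y ^ (k + 1)) + 1 := by
      have := Finset.sum_range_succ'
        (fun k => gb (r ^ 2) N k * (r ^ (k * (k - 1)) * y ^ k)) (N + 1)
      rw [Finset.sum_range_succ, gb_eq_zero _ N (N + 1) (by omega)] at this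
      simpa [gb_n_zero] using this
    have h2 : ∑ k ∈ Finset.range (N + 1),
          (r ^ 2) ^ (N - k) * gb (r ^ 2) N k * (r ^ ((k + 1) * (k + 1 - 1)) * y ^ (k + 1)) =
        (∑ k ∈ Finset.range (N + 1), gb (r ^ 2) N k * (r ^ (k * (k - 1)) * y ^ k)) *
          (y * (r ^ 2) ^ N) := by
      rw [Finset.sum_mul]
      refine Finset.sum_congr rfl fun k hk => ?_
      have hk' : k ≤ N := by simpa [Nat.lt_succ_iff] using hk
      have e1 : (r ^ 2) ^ N = (r ^ 2) ^ (N - k) * r ^ (2 * k) := by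
        rw [pow_mul r 2 k, ← pow_add]; congr 1; omega
      have e2 : r ^ ((k + 1) * (k + 1 - 1)) = r ^ (k * (k - 1)) * r ^ (2 * k) := by
        rw [← pow_add]; congr 1
        cases k with
        | zero => rfl
        | succ k => simp only [Nat.add_sub_cancel]; ring
      rw [e1, e2]; ring
    simp only [gb_succ]
    have h3 : ∀ k, (gb (r ^ 2) N (k + 1) + (r ^ 2) ^ (N - k) * gb (r ^ 2) N k) *
        (r ^ ((k + 1) * (k + 1 - 1)) * y ^ (k + 1)) =
        gb (r ^ 2) N (k + 1) * (r ^ ((k + 1) * (k + 1 - 1)) * y ^ (k + 1)) +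
        (r ^ 2) ^ (N - k) * gb (r ^ 2) N k * (r ^ ((k + 1) * (k + 1 - 1)) * y ^ (k + 1)) :=
      fun k => add_mul _ _ _
    simp only [h3, Finset.sum_add_distrib]
    rw [h2, mul_add, mul_one]
    nth_rewrite 1 [h1]
    simp [gb_n_zero]
    ring

/-- Finite product `(p;p)_N`. -/
noncomputable def fp (p : ℂ) (N : ℕ) : ℂ := ∏ j ∈ Finset.range N, (1 - p * p ^ j)

lemma fp_succ (p : ℂ) (N : ℕ) : fp p (N + 1) = fp p N * (1 - p * p ^ N) :=
  Finset.prod_range_succ _ _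

lemma gb_formula (p : ℂ) (N : ℕ) : ∀ k m : ℕ, k + m = N →
    gb p N k * (fp p k * fp p m) = fp p N := by
  induction N with
  | zero => intro k m h
            obtain ⟨rfl, rfl⟩ : k = 0 ∧ m = 0 := by omega
            simp [gb_n_zero, fp]
  | succ N ih =>
    intro k m h
    rcases k with _ | k
    · obtain rfl : m = N + 1 := by omega
      simp [gb_n_zero, fp]
    · rw [gb_succ]
      rcases m with _ | m
      · obtain rfl : k = N := by omega
        have := ih k 0 (by omega)
        rw [gb_eq_zero _ k (k + 1) (by omega), fp_succ]
        simp only [Nat.sub_self, pow_zero, one_mul, zero_add]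
        linear_combination (1 - p * p ^ k) * this
      · have h1 := ih (k + 1) m (by omega)
        have h2 := ih k (m + 1) (by omega)
        have h3 : N - k = m + 1 := by omega
        have h4 : N = k + m + 1 := by omega
        rw [h3, fp_succ p N]
        have h5 : p ^ N = p ^ k * p ^ m * p := by rw [h4]; ring
        rw [h5]
        rw [fp_succ] at h1 h2
        rw [fp_succ, fp_succ]
        linear_combination (1 - p * p ^ m) * h1 + p ^ (m + 1) * (1 - p * p ^ k) * h2

lemma prod_inv_aux (r w : ℂ) (hr : r ≠ 0) (hw : w ≠ 0) (n : ℕ) :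
    (∏ j ∈ Finset.range n, (1 + w * (r ^ (2 * j + 1))⁻¹)) * r ^ (n ^ 2) =
      w ^ n * ∏ j ∈ Finset.range n, (1 + w⁻¹ * r ^ (2 * j + 1)) := by
  induction n with
  | zero => simp
  | succ n ih =>
    rw [Finset.prod_range_succ, Finset.prod_range_succ]
    have e : r ^ ((n + 1) ^ 2) = r ^ (n ^ 2) * r ^ (2 * n + 1) := by
      rw [← pow_add]; congr 1; ring
    have h1 : (1 + w * (r ^ (2 * n + 1))⁻¹) * r ^ (2 * n + 1) =
        w * (1 + w⁻¹ * r ^ (2 * n + 1)) := by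
      field_simp
      ring
    rw [e, pow_succ w n]
    linear_combination (1 + w * (r ^ (2 * n + 1))⁻¹) * r ^ (2 * n + 1) * ih +
      w ^ n * (∏ j ∈ Finset.range n, (1 + w⁻¹ * r ^ (2 * j + 1))) * h1

lemma finite_jtp (r w : ℂ) (hr : r ≠ 0) (hw : w ≠ 0) (n : ℕ) :
    (∏ j ∈ Finset.range n, (1 + w * r ^ (2 * j + 1))) *
      (∏ j ∈ Finset.range n, (1 + w⁻¹ * r ^ (2 * j + 1))) =
      ∑ k ∈ Finset.range (2 * n + 1),
        gb (r ^ 2) (2 * n) k * (r ^ (((k : ℤ) - n) ^ 2) * w ^ ((k : ℤ) - n)) := by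
  have h := gb_binom r (w * r * (r ^ (2 * n))⁻¹) (2 * n)
  have e1 : ∏ j ∈ Finset.range (2 * n), (1 + w * r * (r ^ (2 * n))⁻¹ * (r ^ 2) ^ j) =
      (∏ j ∈ Finset.range n, (1 + w * (r ^ (2 * j + 1))⁻¹)) *
        ∏ j ∈ Finset.range n, (1 + w * r ^ (2 * j + 1)) := by
    rw [two_mul, Finset.prod_range_add,
      ← Finset.prod_range_reflect (fun j => 1 + w * (r ^ (2 * j + 1))⁻¹)]
    congr 1
    · refine Finset.prod_congr rfl fun j hj => ?_
      have hj' : j < n := by simpa using hj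
      have e2 : r ^ (n + n) = r ^ (2 * (n - 1 - j) + 1) * r * (r ^ 2) ^ j := by
        rw [← pow_mul, ← pow_succ, ← pow_add]; congr 1; omega
      rw [e2]
      field_simp
    · refine Finset.prod_congr rfl fun j hj => ?_
      have e2 : (r ^ 2) ^ (n + j) = r ^ (n + n) * r ^ (2 * j) := by
        rw [← pow_mul, ← pow_add]; congr 1; ring
      rw [e2, pow_succ]
      field_simp
  rw [e1] at h
  have h2 := prod_inv_aux r w hr hw n
  have hwn : w ^ n ≠ 0 := pow_ne_zero _ hw
  apply mul_left_cancel₀ hwn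
  calc w ^ n * ((∏ j ∈ Finset.range n, (1 + w * r ^ (2 * j + 1))) *
      (∏ j ∈ Finset.range n, (1 + w⁻¹ * r ^ (2 * j + 1)))) =
      ((∏ j ∈ Finset.range n, (1 + w * (r ^ (2 * j + 1))⁻¹)) *
        ∏ j ∈ Finset.range n, (1 + w * r ^ (2 * j + 1))) * r ^ (n ^ 2) := by
        linear_combination -(∏ j ∈ Finset.range n, (1 + w * r ^ (2 * j + 1))) * h2
    _ = _ := by
      rw [h, Finset.sum_mul, Finset.mul_sum]
      refine Finset.sum_congr rfl fun k _ => ?_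
      have e3 : w ^ ((k : ℤ) - n) = w ^ k * (w ^ n)⁻¹ := by
        rw [zpow_sub₀ hw]; simp [div_eq_mul_inv]
      have e4 : r ^ (k * (k - 1)) * r ^ k = r ^ (k ^ 2) := by
        rw [← pow_add]; congr 1
        cases k with
        | zero => rfl
        | succ k => simp only [Nat.add_sub_cancel]; ring
      have e5 : r ^ (((k : ℤ) - n) ^ 2) = r ^ (k ^ 2) * r ^ (n ^ 2) * (r ^ (2 * n * k))⁻¹ := by
        have : ((k : ℤ) - n) ^ 2 = ((k ^ 2 + n ^ 2 : ℕ) : ℤ) - ((2 * n * k : ℕ) : ℤ) := by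
          push_cast; ring
        rw [this, zpow_sub₀ hr, zpow_natCast, zpow_natCast, pow_add, div_eq_mul_inv]
      rw [e3, e5, ← e4, mul_pow, mul_pow, inv_pow, ← pow_mul]
      field_simp

lemma theta_summable_nat (r w : ℂ) (hr : r ≠ 0) (hw : w ≠ 0) (hr1 : ‖r‖ < 1) :
    Summable (fun n : ℕ => ‖r ^ (n ^ 2) * w ^ n‖) := by
  apply Summable.norm
  refine summable_of_ratio_test_tendsto_lt_one (l := 0) zero_lt_one
    (Eventually.of_forall fun n => by positivity) ?_
  have h1 : Tendsto (fun n : ℕ => ‖r‖ ^ (2 * n + 1) * ‖w‖) atTop (𝓝 0) := by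
    have h0 := tendsto_pow_atTop_nhds_zero_of_lt_one (norm_nonneg r) hr1
    have h2 : Tendsto (fun n : ℕ => 2 * n + 1) atTop atTop :=
      tendsto_atTop_mono (fun n => by simp only [id]; omega) tendsto_id
    simpa using (h0.comp h2).mul_const ‖w‖
  refine h1.congr fun n => ?_
  have hr' : ‖r‖ ≠ 0 := by simpa using hr
  have hw' : ‖w‖ ≠ 0 := by simpa using hw
  have e : ‖r‖ ^ ((n + 1) ^ 2) = ‖r‖ ^ (n ^ 2) * ‖r‖ ^ (2 * n + 1) := by
    rw [← pow_add]; congr 1; ring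
  rw [norm_mul, norm_mul, norm_pow, norm_pow, norm_pow, norm_pow, e, pow_succ ‖w‖]
  field_simp

lemma theta_summable (r w : ℂ) (hr : r ≠ 0) (hw : w ≠ 0) (hr1 : ‖r‖ < 1) :
    Summable (fun n : ℤ => ‖r ^ (n ^ 2) * w ^ n‖) := by
  apply Summable.of_nat_of_neg
  · refine (theta_summable_nat r w hr hw hr1).congr fun n => ?_
    norm_cast
  · refine (theta_summable_nat r w⁻¹ hr (inv_ne_zero hw) hr1).congr fun n => ?_
    rw [neg_sq, zpow_neg, inv_pow]
    norm_cast

/-- Theta series. -/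
noncomputable def Th (r w : ℂ) : ℂ := ∑' n : ℤ, r ^ (n ^ 2) * w ^ n

/-- Coefficients of the finite triple product. -/
noncomputable def cc (p : ℂ) (n : ℕ) (k : ℤ) : ℂ :=
  if k ∈ Finset.Icc (-(n : ℤ)) n then gb p (2 * n) (k + n).toNat else 0

lemma sum_cc (p : ℂ) (f : ℤ → ℂ) (n : ℕ) :
    ∑ k ∈ Finset.range (2 * n + 1), gb p (2 * n) k * f ((k : ℤ) - n) =
      ∑' k : ℤ, cc p n k * f k := by
  rw [tsum_eq_sum (s := Finset.Icc (-(n : ℤ)) n) (fun k hk => by rw [cc, if_neg hk, zero_mul])]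
  refine Finset.sum_bij (fun k _ => (k : ℤ) - n) ?_ ?_ ?_ ?_
  · intro k hk
    simp only [Finset.mem_range] at hk
    simp only [Finset.mem_Icc]
    omega
  · intro a _ b _ h
    omega
  · intro b hb
    simp only [Finset.mem_Icc] at hb
    refine ⟨(b + n).toNat, ?_, ?_⟩
    · simp only [Finset.mem_range]; omega
    · omega
  · intro k hk
    simp only [Finset.mem_range] at hk
    have : (k : ℤ) - n ∈ Finset.Icc (-(n : ℤ)) n := by
      simp only [Finset.mem_Icc]; omega
    rw [cc, if_pos this]
    congr 2
    omega

lemma fp_ne_zero (p : ℂ) (hp : ‖p‖ < 1) (N : ℕ) : fp p N ≠ 0 := by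
  refine Finset.prod_ne_zero_iff.2 fun j _ h => ?_
  have h1 : p ^ (j + 1) = 1 := by linear_combination -h
  have h2 : ‖p ^ (j + 1)‖ < 1 := by
    rw [norm_pow]; exact pow_lt_one₀ (norm_nonneg _) hp (by omega)
  rw [h1] at h2
  simp at h2

lemma cc_eq (p : ℂ) (hp : ‖p‖ < 1) (n : ℕ) (k : ℤ) (hk : k ∈ Finset.Icc (-(n : ℤ)) n) :
    cc p n k = fp p (2 * n) * ((fp p (k + n).toNat)⁻¹ * (fp p (n - k).toNat)⁻¹) := by
  rw [cc, if_pos hk]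
  simp only [Finset.mem_Icc] at hk
  have h := gb_formula p (2 * n) (k + n).toNat (n - k).toNat (by omega)
  have h1 := fp_ne_zero p hp (k + n).toNat
  have h2 := fp_ne_zero p hp (n - k).toNat
  rw [← h]
  field_simp

lemma cc_tendsto (p : ℂ) (hp : ‖p‖ < 1) (k : ℤ) :
    Tendsto (fun n => cc p n k) atTop (𝓝 (qPoch p p)⁻¹) := by
  have hF : Tendsto (fp p) atTop (𝓝 (qPoch p p)) := qp_tendsto p p hp
  have h0 := qp_ne_zero p p hp hp
  have t1 : Tendsto (fun n : ℕ => 2 * n) atTop atTop :=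
    tendsto_atTop_mono (fun n => by simp only [id]; omega) tendsto_id
  have t2 : Tendsto (fun n : ℕ => (k + n).toNat) atTop atTop := by
    refine tendsto_atTop.2 fun b => ?_
    filter_upwards [eventually_ge_atTop (b + k.natAbs)] with n hn
    omega
  have t3 : Tendsto (fun n : ℕ => (n - k).toNat) atTop atTop := by
    refine tendsto_atTop.2 fun b => ?_
    filter_upwards [eventually_ge_atTop (b + k.natAbs)] with n hn
    omega
  have h := (hF.comp t1).mul (((hF.comp t2).inv₀ h0).mul ((hF.comp t3).inv₀ h0))
  rw [mul_inv_cancel_left₀ h0] at h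
  refine h.congr' ?_
  filter_upwards [eventually_ge_atTop k.natAbs] with n hn
  rw [cc_eq p hp n k (by simp only [Finset.mem_Icc]; omega)]
  rfl

lemma cc_bound (p : ℂ) (hp : ‖p‖ < 1) : ∃ M : ℝ, ∀ n k, ‖cc p n k‖ ≤ M := by
  have hF : Tendsto (fp p) atTop (𝓝 (qPoch p p)) := qp_tendsto p p hp
  have h0 := qp_ne_zero p p hp hp
  obtain ⟨A, hA⟩ := hF.norm.bddAbove_range
  obtain ⟨B, hB⟩ := (hF.inv₀ h0).norm.bddAbove_range
  have hA' : ∀ n, ‖fp p n‖ ≤ A := fun n => hA ⟨n, rfl⟩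
  have hB' : ∀ n, ‖(fp p n)⁻¹‖ ≤ B := fun n => hB ⟨n, rfl⟩
  have hA0 : 0 ≤ A := (norm_nonneg _).trans (hA' 0)
  have hB0 : 0 ≤ B := (norm_nonneg _).trans (hB' 0)
  refine ⟨A * (B * B), fun n k => ?_⟩
  by_cases hk : k ∈ Finset.Icc (-(n : ℤ)) n
  · rw [cc_eq p hp n k hk, norm_mul, norm_mul]
    have a1 := hA' (2 * n)
    have a2 := hB' (k + n).toNat
    have a3 := hB' (n - k).toNat
    gcongr
  · rw [cc, if_neg hk, norm_zero]
    positivity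

/-- Jacobi triple product. -/
lemma jtp (r w : ℂ) (hr : r ≠ 0) (hw : w ≠ 0) (hr1 : ‖r‖ < 1) :
    Th r w = qPoch (r ^ 2) (r ^ 2) * (qPoch (-(w * r)) (r ^ 2) * qPoch (-(w⁻¹ * r)) (r ^ 2)) := by
  have hp : ‖r ^ 2‖ < 1 := by
    rw [norm_pow]; exact pow_lt_one₀ (norm_nonneg _) hr1 (by omega)
  have h0 := qp_ne_zero _ _ hp hp
  obtain ⟨M, hM⟩ := cc_bound (r ^ 2) hp
  have h1 : Tendsto (fun n => ∑' k : ℤ, cc (r ^ 2) n k * (r ^ (k ^ 2) * w ^ k)) atTop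
      (𝓝 (∑' k : ℤ, (qPoch (r ^ 2) (r ^ 2))⁻¹ * (r ^ (k ^ 2) * w ^ k))) := by
    refine tendsto_tsum_of_dominated_convergence
      ((theta_summable r w hr hw hr1).mul_left M)
      (fun k => (cc_tendsto _ hp k).mul_const _) (Eventually.of_forall fun n k => ?_)
    rw [norm_mul]
    exact mul_le_mul_of_nonneg_right (hM n k) (norm_nonneg _)
  have h2 := (qp_tendsto (-(w * r)) _ hp).mul (qp_tendsto (-(w⁻¹ * r)) _ hp)
  have e : ∀ (v : ℂ) (j : ℕ), 1 - -(v * r) * (r ^ 2) ^ j = 1 + v * r ^ (2 * j + 1) := by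
    intro v j
    rw [← pow_mul, pow_succ]; ring
  simp only [e] at h2
  have h3 := tendsto_nhds_unique h1 (h2.congr fun n => by
    rw [finite_jtp r w hr hw n, ← sum_cc (r ^ 2) (fun k => r ^ (k ^ 2) * w ^ k)])
  rw [tsum_mul_left] at h3
  rw [← h3, Th, mul_inv_cancel_left₀ h0]

lemma sq_zpow (r : ℂ) (m : ℤ) : (r ^ 2) ^ m = r ^ (2 * m) := by
  rw [zpow_mul]; norm_cast

lemma term_even (r u v : ℂ) (hr : r ≠ 0) (hu : u ≠ 0) (hv : v ≠ 0) (k l : ℤ) :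
    (r ^ ((k + l) ^ 2) * u ^ (k + l)) * (r ^ ((k - l) ^ 2) * v ^ (k - l)) =
      ((r ^ 2) ^ (k ^ 2) * (u * v) ^ k) * ((r ^ 2) ^ (l ^ 2) * (u / v) ^ l) := by
  have e : r ^ ((k + l) ^ 2) * r ^ ((k - l) ^ 2) = r ^ (2 * k ^ 2) * r ^ (2 * l ^ 2) := by
    rw [← zpow_add₀ hr, ← zpow_add₀ hr]; congr 1; ring
  rw [sq_zpow, sq_zpow, mul_zpow, div_zpow, zpow_add₀ hu, zpow_sub₀ hv]
  linear_combination (u ^ k * u ^ l * (v ^ k / v ^ l)) * e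

lemma term_odd (r u v : ℂ) (hr : r ≠ 0) (hu : u ≠ 0) (hv : v ≠ 0) (k l : ℤ) :
    (r ^ ((k + l + 1) ^ 2) * u ^ (k + l + 1)) * (r ^ ((k - l) ^ 2) * v ^ (k - l)) =
      r * u * (((r ^ 2) ^ (k ^ 2) * (r ^ 2 * (u * v)) ^ k) *
        ((r ^ 2) ^ (l ^ 2) * (r ^ 2 * (u / v)) ^ l)) := by
  have e : r ^ ((k + l + 1) ^ 2) * r ^ ((k - l) ^ 2) =
      r ^ (2 * k ^ 2) * r ^ (2 * l ^ 2) * r ^ (2 * k) * r ^ (2 * l) * r := by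
    rw [← zpow_add₀ hr, ← zpow_add₀ hr, ← zpow_add₀ hr, ← zpow_add₀ hr, ← zpow_add_one₀ hr]
    congr 1; ring
  rw [mul_zpow (r ^ 2), mul_zpow (r ^ 2), sq_zpow, sq_zpow, sq_zpow, sq_zpow, mul_zpow, div_zpow,
    zpow_add_one₀ hu, zpow_add₀ hu, zpow_sub₀ hv]
  linear_combination (u ^ k * u ^ l * u * (v ^ k / v ^ l)) * e

/-- Even/odd reindexing. -/
lemma split_sum (f : ℤ × ℤ → ℂ) (a b : ℂ)
    (h1 : HasSum (fun z : ℤ × ℤ => f (z.1 + z.2, z.1 - z.2)) a)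
    (h2 : HasSum (fun z : ℤ × ℤ => f (z.1 + z.2 + 1, z.1 - z.2)) b) : HasSum f (a + b) := by
  have hi1 : Function.Injective (fun z : ℤ × ℤ => (z.1 + z.2, z.1 - z.2)) := by
    rintro ⟨a, b⟩ ⟨c, d⟩ h
    simp only [Prod.mk.injEq] at h ⊢
    omega
  have hi2 : Function.Injective (fun z : ℤ × ℤ => (z.1 + z.2 + 1, z.1 - z.2)) := by
    rintro ⟨a, b⟩ ⟨c, d⟩ h
    simp only [Prod.mk.injEq] at h ⊢
    omega
  refine ((hi1.hasSum_range_iff).2 h1).add_isCompl ?_ ((hi2.hasSum_range_iff).2 h2)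
  rw [isCompl_iff, Set.disjoint_left, codisjoint_iff]
  constructor
  · rintro _ ⟨⟨a, b⟩, rfl⟩ ⟨⟨c, d⟩, h⟩
    simp only [Prod.mk.injEq] at h
    omega
  · refine Set.eq_univ_of_forall ?_
    rintro ⟨m, n⟩
    change _ ∈ _ ∪ _
    simp only [Set.mem_union, Set.mem_range, Prod.exists,
      Prod.mk.injEq]
    rcases Int.even_or_odd' (m + n) with ⟨k, hk | hk⟩
    · left; exact ⟨k, m - k, by omega, by omega⟩
    · right; exact ⟨k, m - k - 1, by omega, by omega⟩

lemma Th_hasSum_mul (r u v : ℂ) (hr : r ≠ 0) (hu : u ≠ 0) (hv : v ≠ 0) (hr1 : ‖r‖ < 1) :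
    HasSum (fun z : ℤ × ℤ => (r ^ (z.1 ^ 2) * u ^ z.1) * (r ^ (z.2 ^ 2) * v ^ z.2))
      (Th r u * Th r v) := by
  have s1 := theta_summable r u hr hu hr1
  have s2 := theta_summable r v hr hv hr1
  rw [Th, Th, tsum_mul_tsum_of_summable_norm s1 s2]
  exact (summable_mul_of_summable_norm s1 s2).hasSum

lemma Th_mul (r u v : ℂ) (hr : r ≠ 0) (hu : u ≠ 0) (hv : v ≠ 0) (hr1 : ‖r‖ < 1) :
    Th r u * Th r v = Th (r ^ 2) (u * v) * Th (r ^ 2) (u / v) +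
      r * u * (Th (r ^ 2) (r ^ 2 * (u * v)) * Th (r ^ 2) (r ^ 2 * (u / v))) := by
  have hp : ‖r ^ 2‖ < 1 := by
    rw [norm_pow]; exact pow_lt_one₀ (norm_nonneg _) hr1 (by omega)
  have hp0 : r ^ 2 ≠ 0 := pow_ne_zero _ hr
  have huv : u * v ≠ 0 := mul_ne_zero hu hv
  have hud : u / v ≠ 0 := div_ne_zero hu hv
  refine (Th_hasSum_mul r u v hr hu hv hr1).unique (split_sum _ _ _ ?_ ?_)
  · have h := Th_hasSum_mul _ _ _ hp0 huv hud hp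
    simp only [← term_even r u v hr hu hv] at h
    exact h
  · have h := (Th_hasSum_mul _ _ _ hp0 (mul_ne_zero hp0 huv) (mul_ne_zero hp0 hud) hp).mul_left
      (r * u)
    simp only [← term_odd r u v hr hu hv] at h
    exact h

lemma Th_shift (r w : ℂ) (hr : r ≠ 0) (hw : w ≠ 0) :
    Th r (r * w) = Th r (w / r) / w := by
  rw [Th, Th, ← tsum_div_const, ← (Equiv.addRight (1 : ℤ)).tsum_eq (fun n : ℤ => _ / w)]
  refine tsum_congr fun n => ?_
  simp only [Equiv.coe_addRight]
  have e : r ^ ((n + 1) ^ 2) = r ^ (n ^ 2) * r ^ n * r ^ n * r := by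
    rw [← zpow_add₀ hr, ← zpow_add₀ hr, ← zpow_add_one₀ hr]; congr 1; ring
  rw [e, mul_zpow, div_zpow, zpow_add_one₀ hw, zpow_add_one₀ hr]
  field_simp

/-- `θ(z; p)` up to the factor `(p;p)`, with `p = r²`. -/
lemma theta_eq (r z : ℂ) (hr : r ≠ 0) (hz : z ≠ 0) (hr1 : ‖r‖ < 1) :
    qPoch (r ^ 2) (r ^ 2) * (qPoch z (r ^ 2) * qPoch (r ^ 2 / z) (r ^ 2)) = Th r (-z / r) := by
  rw [jtp r (-z / r) hr (div_ne_zero (neg_ne_zero.2 hz) hr) hr1]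
  congr 3
  · field_simp
  · field_simp

lemma theta_add (r a b : ℂ) (hr : r ≠ 0) (ha : a ≠ 0) (hb : b ≠ 0) (hr1 : ‖r‖ < 1) :
    Th r (-(a * b) / r) * Th r (-(a / b) / r) =
      Th (r ^ 2) (a ^ 2 / r ^ 2) * Th (r ^ 2) (b ^ 2) -
        a / b * (Th (r ^ 2) (a ^ 2) * Th (r ^ 2) (b ^ 2 / r ^ 2)) := by
  have hu : -(a * b) / r ≠ 0 := div_ne_zero (neg_ne_zero.2 (mul_ne_zero ha hb)) hr
  have hv : -(a / b) / r ≠ 0 := div_ne_zero (neg_ne_zero.2 (div_ne_zero ha hb)) hr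
  rw [Th_mul r _ _ hr hu hv hr1]
  have e1 : -(a * b) / r * (-(a / b) / r) = a ^ 2 / r ^ 2 := by field_simp
  have e2 : -(a * b) / r / (-(a / b) / r) = b ^ 2 := by field_simp
  have e3 : r ^ 2 * (a ^ 2 / r ^ 2) = a ^ 2 := by field_simp
  rw [e1, e2, e3, Th_shift (r ^ 2) (b ^ 2) (pow_ne_zero _ hr) (pow_ne_zero _ hb)]
  field_simp
  ring

/-- Weierstrass three-term relation. -/
lemma weierstrass (r a b c : ℂ) (hr : r ≠ 0) (ha : a ≠ 0) (hb : b ≠ 0) (hc : c ≠ 0)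
    (hr1 : ‖r‖ < 1) :
    Th r (-(a * b) / r) * Th r (-(a / b) / r) * Th r (-c / r) ^ 2 =
      Th r (-a / r) ^ 2 * (Th r (-(c * b) / r) * Th r (-(c / b) / r)) +
      c / b * (Th r (-b / r) ^ 2 * (Th r (-(a * c) / r) * Th r (-(a / c) / r))) := by
  have h1 := theta_add r c 1 hr hc one_ne_zero hr1
  have h2 := theta_add r a 1 hr ha one_ne_zero hr1
  have h3 := theta_add r b 1 hr hb one_ne_zero hr1
  simp only [mul_one, div_one, one_pow, ← sq] at h1 h2 h3
  rw [h1, h2, h3, theta_add r a b hr ha hb hr1, theta_add r c b hr hc hb hr1,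
    theta_add r a c hr ha hc hr1]
  field_simp
  ring

lemma key (q : ℂ) (hq : ‖q‖ < 1) (h0 : q ≠ 0) :
    qPoch (q ^ 6) (q ^ 12) ^ 2 * (qPoch (q ^ 2) (q ^ 12) * qPoch (q ^ 10) (q ^ 12)) *
      (qPoch (q ^ 3) (q ^ 12) * qPoch (q ^ 9) (q ^ 12)) ^ 2 =
    (qPoch q (q ^ 12) * qPoch (q ^ 5) (q ^ 12) * qPoch (q ^ 7) (q ^ 12) *
      qPoch (q ^ 11) (q ^ 12)) * ((qPoch (q ^ 4) (q ^ 12) * qPoch (q ^ 8) (q ^ 12)) ^ 2 +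
      q * (qPoch (q ^ 2) (q ^ 12) * qPoch (q ^ 10) (q ^ 12)) ^ 2) := by
  have hr1 : ‖q ^ 6‖ < 1 := by
    rw [norm_pow]; exact pow_lt_one₀ (norm_nonneg _) hq (by omega)
  have hp : ‖q ^ 12‖ < 1 := by
    rw [norm_pow]; exact pow_lt_one₀ (norm_nonneg _) hq (by omega)
  have hr : q ^ 6 ≠ 0 := pow_ne_zero _ h0
  have hw := weierstrass (q ^ 6) (q ^ 4) (q ^ 2) (q ^ 3) hr (pow_ne_zero _ h0) (pow_ne_zero _ h0)
    (pow_ne_zero _ h0) hr1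
  have hc := qp_ne_zero (q ^ 12) (q ^ 12) hp hp
  have T : ∀ z w : ℂ, z ≠ 0 → z * w = q ^ 12 →
      Th (q ^ 6) (-z / q ^ 6) = qPoch (q ^ 12) (q ^ 12) * (qPoch z (q ^ 12) * qPoch w (q ^ 12)) := by
    intro z w hz hzw
    have h := theta_eq (q ^ 6) z hr hz hr1
    have e : (q ^ 6) ^ 2 = q ^ 12 := by ring
    rw [e] at h
    rw [← h, ← hzw, mul_div_cancel_left₀ _ hz]
  have e1 : q ^ 4 * q ^ 2 = q ^ 6 := by ring
  have e2 : q ^ 4 / q ^ 2 = q ^ 2 := by field_simp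
  have e3 : q ^ 3 * q ^ 2 = q ^ 5 := by ring
  have e4 : q ^ 3 / q ^ 2 = q := by field_simp
  have e5 : q ^ 4 * q ^ 3 = q ^ 7 := by ring
  have e6 : q ^ 4 / q ^ 3 = q := by field_simp
  rw [e1, e2, e3, e4, e5, e6, T (q ^ 6) (q ^ 6) (pow_ne_zero _ h0) (by ring),
    T (q ^ 2) (q ^ 10) (pow_ne_zero _ h0) (by ring),
    T (q ^ 3) (q ^ 9) (pow_ne_zero _ h0) (by ring),
    T (q ^ 4) (q ^ 8) (pow_ne_zero _ h0) (by ring),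
    T (q ^ 5) (q ^ 7) (pow_ne_zero _ h0) (by ring),
    T (q ^ 7) (q ^ 5) (pow_ne_zero _ h0) (by ring),
    T q (q ^ 11) h0 (by ring)] at hw
  apply mul_left_cancel₀ (pow_ne_zero 4 hc)
  linear_combination hw

theorem one_div_x_sq_two_dissection (q : ℂ) (hq : ‖q‖ < 1) :
    1 / x q ^ 2 =
      (q ^ 2 * qPoch (q ^ 2) (q ^ 2) ^ 2 * qPoch (q ^ 12) (q ^ 12) ^ 6 /
          (qPoch (q ^ 4) (q ^ 4) ^ 2 * qPoch (q ^ 6) (q ^ 6) ^ 6) +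
        qPoch (q ^ 4) (q ^ 4) ^ 6 /
          (qPoch (q ^ 2) (q ^ 2) ^ 2 * qPoch (q ^ 6) (q ^ 6) ^ 2 *
            qPoch (q ^ 12) (q ^ 12) ^ 2)) +
      2 * q * qPoch (q ^ 4) (q ^ 4) ^ 2 * qPoch (q ^ 12) (q ^ 12) ^ 2 /
        qPoch (q ^ 6) (q ^ 6) ^ 4 := by

  by_cases h0 : q = 0
  · subst h0
    simp [x, qPoch]
  have hlt : ∀ n : ℕ, n ≠ 0 → ‖q ^ n‖ < 1 := fun n hn => by
    rw [norm_pow]; exact pow_lt_one₀ (norm_nonneg _) hq hn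
  have hk := key q hq h0
  have s1 := qp_split 6 (by omega) q (q ^ 2) (hlt 2 (by omega))
  have s2 := qp_split 2 (by omega) (q ^ 3) (q ^ 6) (hlt 6 (by omega))
  have s3 := qp_split 6 (by omega) (q ^ 2) (q ^ 2) (hlt 2 (by omega))
  have s4 := qp_split 3 (by omega) (q ^ 4) (q ^ 4) (hlt 4 (by omega))
  have s5 := qp_split 2 (by omega) (q ^ 6) (q ^ 6) (hlt 6 (by omega))
  simp only [Finset.prod_range_succ, Finset.prod_range_zero, one_mul, ← pow_mul, ← pow_add,
    ← pow_succ', mul_one, pow_zero] at s1 s2 s3 s4 s5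
  norm_num at s1 s2 s3 s4 s5
  have n1 := qp_ne_zero q (q ^ 12) hq (hlt 12 (by omega))
  have N : ∀ n : ℕ, n ≠ 0 → qPoch (q ^ n) (q ^ 12) ≠ 0 := fun n hn =>
    qp_ne_zero _ _ (hlt n hn) (hlt 12 (by omega))
  have n2 := N 2 (by omega)
  have n3 := N 3 (by omega)
  have n4 := N 4 (by omega)
  have n5 := N 5 (by omega)
  have n6 := N 6 (by omega)
  have n7 := N 7 (by omega)
  have n8 := N 8 (by omega)
  have n9 := N 9 (by omega)
  have n10 := N 10 (by omega)
  have n11 := N 11 (by omega)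
  have n12 := N 12 (by omega)
  rw [x, s1, s2, s3, s4, s5]
  generalize qPoch q (q ^ 12) = a1 at *
  generalize qPoch (q ^ 2) (q ^ 12) = a2 at *
  generalize qPoch (q ^ 3) (q ^ 12) = a3 at *
  generalize qPoch (q ^ 4) (q ^ 12) = a4 at *
  generalize qPoch (q ^ 5) (q ^ 12) = a5 at *
  generalize qPoch (q ^ 6) (q ^ 12) = a6 at *
  generalize qPoch (q ^ 7) (q ^ 12) = a7 at *
  generalize qPoch (q ^ 8) (q ^ 12) = a8 at *
  generalize qPoch (q ^ 9) (q ^ 12) = a9 at *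
  generalize qPoch (q ^ 10) (q ^ 12) = a10 at *
  generalize qPoch (q ^ 11) (q ^ 12) = a11 at *
  generalize qPoch (q ^ 12) (q ^ 12) = a12 at *
  clear s1 s2 s3 s4 s5 N
  have hk2 : (a3 * a9) ^ 2 / (a1 * a5 * a7 * a11) =
      ((a4 * a8) ^ 2 + q * (a2 * a10) ^ 2) / (a6 ^ 2 * (a2 * a10)) := by
    rw [div_eq_div_iff (by positivity) (by positivity)]
    linear_combination hk
  calc _ = ((a3 * a9) ^ 2 / (a1 * a5 * a7 * a11)) ^ 2 := by field_simp
    _ = _ := by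
      rw [hk2]
      field_simp
      ring
end

section
/- For every complex number q with |q| < 1, with x(q) = (q; q^2)_∞ / (q^3; q^6)_∞^3, one has the 2-dissection 2 q x(q) = −2 q^2 (q^2; q^2)_∞^2 (q^{12}; q^{12})_∞^6 / ((q^6; q^6)_∞^6 (q^4; q^4)_∞^2) + 2 q (q^4; q^4)_∞^2 (q^{12}; q^{12})_∞^2 / (q^6; q^6)_∞^4. -/
open Filter Topology

lemma qPoch_summable (a : ℂ) {q : ℂ} (hq : ‖q‖ < 1) : Summable fun n : ℕ => ‖-(a * q ^ n)‖ := by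
  simp only [norm_neg, norm_mul, norm_pow]
  exact (summable_geometric_of_lt_one (norm_nonneg _) hq).mul_left _

lemma qPoch_tendsto (a : ℂ) {q : ℂ} (hq : ‖q‖ < 1) :
    Tendsto (fun N => ∏ i ∈ Finset.range N, (1 - a * q ^ i)) atTop (𝓝 (qPoch a q)) := by
  have h := (multipliable_one_add_of_summable (qPoch_summable a hq)).hasProd.tendsto_prod_nat
  simpa only [qPoch, sub_eq_add_neg] using h

lemma qPoch_ne_zero {a q : ℂ} (ha : ‖a‖ < 1) (hq : ‖q‖ < 1) : qPoch a q ≠ 0 := by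
  have h := tprod_one_add_ne_zero_of_summable (f := fun n : ℕ => -(a * q ^ n)) (fun i h0 => ?_)
    (qPoch_summable a hq)
  · simpa only [qPoch, sub_eq_add_neg] using h
  · have h1 : a * q ^ i = 1 := by linear_combination -h0
    have h2 : ‖a * q ^ i‖ < 1 := by
      rw [norm_mul, norm_pow]
      calc ‖a‖ * ‖q‖ ^ i ≤ ‖a‖ * 1 := by
            gcongr
            exact pow_le_one₀ (norm_nonneg _) hq.le
        _ < 1 := by simpa using ha
    rw [h1] at h2
    simp at h2

/-- The finite product `(Q; Q)_n`. -/
noncomputable def finPoch (Q : ℂ) (n : ℕ) : ℂ := ∏ i ∈ Finset.range n, (1 - Q * Q ^ i)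

/-- The reciprocal of `(Q; Q)_k`, extended by zero to negative `k`. -/
noncomputable def recPoch (Q : ℂ) (k : ℤ) : ℂ := if 0 ≤ k then (finPoch Q k.toNat)⁻¹ else 0

lemma finPoch_ne_zero {Q : ℂ} (hQ : ‖Q‖ < 1) (n : ℕ) : finPoch Q n ≠ 0 := by
  refine Finset.prod_ne_zero_iff.2 fun i _ h0 => ?_
  have h1 : Q ^ (i + 1) = 1 := by linear_combination -h0
  have h2 : ‖Q ^ (i + 1)‖ < 1 := by
    rw [norm_pow]
    exact pow_lt_one₀ (norm_nonneg _) hQ (by omega)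
  rw [h1] at h2
  simp at h2

lemma recPoch_pred {Q : ℂ} (hQ : ‖Q‖ < 1) (k : ℤ) :
    recPoch Q (k - 1) = (1 - Q ^ k) * recPoch Q k := by
  rcases lt_trichotomy k 0 with h | h | h
  · simp [recPoch, show ¬ (0 ≤ k) by omega, show ¬ (1 ≤ k) by omega]
  · subst h
    simp [recPoch]
  · obtain ⟨n, rfl⟩ : ∃ n : ℕ, k = n + 1 := ⟨(k - 1).toNat, by omega⟩
    have h1 : recPoch Q ((n : ℤ) + 1) = (finPoch Q (n + 1))⁻¹ := by
      rw [recPoch, if_pos (by omega)]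
      congr 1
    have h2 : recPoch Q ((n : ℤ) + 1 - 1) = (finPoch Q n)⁻¹ := by
      rw [recPoch, if_pos (by omega)]
      congr 2
      omega
    have h3 : finPoch Q (n + 1) = finPoch Q n * (1 - Q ^ ((n : ℤ) + 1)) := by
      rw [finPoch, Finset.prod_range_succ, ← finPoch]
      congr 2
      norm_cast
      ring
    have h4 := finPoch_ne_zero hQ (n + 1)
    have h5 := finPoch_ne_zero hQ n
    rw [h1, h2, h3]
    rw [h3] at h4
    have h6 := right_ne_zero_of_mul h4
    field_simp

lemma finPoch_tendsto {Q : ℂ} (hQ : ‖Q‖ < 1) :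
    Tendsto (finPoch Q) atTop (𝓝 (qPoch Q Q)) := qPoch_tendsto Q hQ

lemma finPoch_bdd {Q : ℂ} (hQ : ‖Q‖ < 1) : ∃ C : ℝ, ∀ n, ‖finPoch Q n‖ ≤ C := by
  obtain ⟨C, hC⟩ := (finPoch_tendsto hQ).norm.bddAbove_range
  exact ⟨C, fun n => hC ⟨n, rfl⟩⟩

lemma recPoch_bdd {Q : ℂ} (hQ : ‖Q‖ < 1) : ∃ C : ℝ, 0 ≤ C ∧ ∀ k, ‖recPoch Q k‖ ≤ C := by
  obtain ⟨C, hC⟩ := ((finPoch_tendsto hQ).inv₀ (qPoch_ne_zero hQ hQ)).norm.bddAbove_range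
  have hC0 : 0 ≤ C := (norm_nonneg _).trans (hC ⟨0, rfl⟩)
  refine ⟨C, hC0, fun k => ?_⟩
  rw [recPoch]
  split_ifs
  · exact hC ⟨k.toNat, rfl⟩
  · simpa using hC0

lemma recPoch_tendsto {Q : ℂ} (hQ : ‖Q‖ < 1) (m : ℤ) :
    Tendsto (fun N : ℕ => recPoch Q (N + m)) atTop (𝓝 (qPoch Q Q)⁻¹) := by
  have h := (finPoch_tendsto hQ).inv₀ (qPoch_ne_zero hQ hQ)
  have h2 : Tendsto (fun N : ℕ => ((N : ℤ) + m).toNat) atTop atTop := by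
    refine tendsto_atTop.2 fun b => ?_
    filter_upwards [eventually_ge_atTop (b + m.natAbs)] with N hN
    omega
  refine (h.comp h2).congr' ?_
  filter_upwards [eventually_ge_atTop m.natAbs] with N hN
  rw [recPoch, if_pos (by omega)]
  rfl

lemma hasSum_conv {f g : ℤ → ℂ} {a b : ℂ} (h : HasSum f a) (hf : ∀ n, g n = f n) (hb : b = a) :
    HasSum g b := by
  rw [show g = f from funext hf, hb]
  exact h

lemma finite_jtp_s10 {q z : ℂ} (hq0 : q ≠ 0) (hz : z ≠ 0) (hq : ‖q ^ 2‖ < 1) (N : ℕ) :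
    HasSum (fun n : ℤ => finPoch (q ^ 2) (2 * N) * recPoch (q ^ 2) (N - n) *
      recPoch (q ^ 2) (N + n) * (z ^ n * q ^ (n ^ 2)))
      (∏ i ∈ Finset.range N, ((1 + z * q ^ (2 * i + 1)) * (1 + z⁻¹ * q ^ (2 * i + 1)))) := by
  induction N with
  | zero =>
    refine hasSum_conv (hasSum_ite_eq (0 : ℤ) (1 : ℂ)) (fun n => ?_) (by simp)
    split_ifs with h
    · subst h
      simp [recPoch, finPoch]
    · rcases lt_or_gt_of_ne h with h | h
      · simp [recPoch, show ¬ (0 ≤ n) by omega]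
      · simp [recPoch, show ¬ (n ≤ 0) by omega]
  | succ N ih =>
    rw [Finset.prod_range_succ]
    have e1 := (Equiv.addRight (-1 : ℤ)).hasSum_iff.2 ih
    have e2 := (Equiv.addRight (1 : ℤ)).hasSum_iff.2 ih
    have key := ((ih.mul_left (1 + q ^ (4 * N + 2))).add (e1.mul_left (z * q ^ (2 * N + 1)))).add
      (e2.mul_left (z⁻¹ * q ^ (2 * N + 1)))
    refine hasSum_conv key (fun n => ?_) ?_
    · simp only [Function.comp, Equiv.coe_addRight]
      set a := recPoch (q ^ 2) (N + 1 - n) with ha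
      set b := recPoch (q ^ 2) (N + 1 + n) with hb
      have A1 : recPoch (q ^ 2) (N - n) = (1 - (q ^ 2) ^ ((N : ℤ) + 1 - n)) * a := by
        rw [ha, ← recPoch_pred hq]; congr 1; ring
      have A2 : recPoch (q ^ 2) (N - (n + 1)) =
          (1 - (q ^ 2) ^ ((N : ℤ) - n)) * ((1 - (q ^ 2) ^ ((N : ℤ) + 1 - n)) * a) := by
        rw [← A1, ← recPoch_pred hq]; congr 1; ring
      have A0 : recPoch (q ^ 2) (N - (n + -1)) = a := by
        rw [ha]; congr 1; ring
      have B1 : recPoch (q ^ 2) (N + n) = (1 - (q ^ 2) ^ ((N : ℤ) + 1 + n)) * b := by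
        rw [hb, ← recPoch_pred hq]; congr 1; ring
      have B2 : recPoch (q ^ 2) (N + (n + -1)) =
          (1 - (q ^ 2) ^ ((N : ℤ) + n)) * ((1 - (q ^ 2) ^ ((N : ℤ) + 1 + n)) * b) := by
        rw [← B1, ← recPoch_pred hq]; congr 1; ring
      have B0 : recPoch (q ^ 2) (N + (n + 1)) = b := by
        rw [hb]; congr 1; ring
      have P : finPoch (q ^ 2) (2 * (N + 1)) =
          finPoch (q ^ 2) (2 * N) * (1 - q ^ 2 * (q ^ 2) ^ (2 * N)) *
            (1 - q ^ 2 * (q ^ 2) ^ (2 * N + 1)) := by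
        rw [show 2 * (N + 1) = 2 * N + 1 + 1 by ring, finPoch, Finset.prod_range_succ,
          Finset.prod_range_succ, ← finPoch]
      have L1 : recPoch (q ^ 2) (((N + 1 : ℕ) : ℤ) - n) = a := by rw [ha]; push_cast; rfl
      have L2 : recPoch (q ^ 2) (((N + 1 : ℕ) : ℤ) + n) = b := by rw [hb]; push_cast; rfl
      rw [L1, L2, P, A0, A1, A2, B0, B1, B2]
      have Z1 : z ^ (n + -1) = z ^ n * z⁻¹ := by rw [zpow_add₀ hz]; simp
      have Z2 : z ^ (n + 1) = z ^ n * z := by rw [zpow_add₀ hz]; simp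
      have hQ0 : q ^ 2 ≠ 0 := pow_ne_zero _ hq0
      have Q1 : q ^ ((n + -1) ^ 2) = q ^ (n ^ 2) * ((q ^ 2) ^ n)⁻¹ * q := by
        rw [show (n + -1) ^ 2 = n ^ 2 + -(2 * n) + 1 by ring, zpow_add₀ hq0, zpow_add₀ hq0,
          zpow_neg, zpow_mul]
        norm_num
      have Q2 : q ^ ((n + 1) ^ 2) = q ^ (n ^ 2) * ((q ^ 2) ^ n) * q := by
        rw [show (n + 1) ^ 2 = n ^ 2 + (2 * n) + 1 by ring, zpow_add₀ hq0, zpow_add₀ hq0,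
          zpow_mul]
        norm_num
      rw [Z1, Z2, Q1, Q2]
      simp only [zpow_add₀ hQ0, zpow_sub₀ hQ0, zpow_one, zpow_natCast]
      have hw : (q ^ 2) ^ n ≠ 0 := zpow_ne_zero _ hQ0
      generalize q ^ (n ^ 2) = t at *
      generalize (q ^ 2) ^ n = w at *
      generalize z ^ n = y at *
      have hN1 : q ^ (2 * N + 1) = q * (q ^ N) ^ 2 := by ring
      have hN2 : q ^ (4 * N + 2) = q ^ 2 * (q ^ N) ^ 4 := by ring
      have hN3 : (q ^ 2) ^ N = (q ^ N) ^ 2 := by ring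
      have hN4 : (q ^ 2) ^ (2 * N) = (q ^ N) ^ 4 := by ring
      have hN5 : (q ^ 2) ^ (2 * N + 1) = q ^ 2 * (q ^ N) ^ 4 := by ring
      rw [hN1, hN2, hN3, hN4, hN5]
      generalize q ^ N = r
      field_simp
      ring
    · field_simp
      ring

lemma theta_summable_nat_s10 {q z : ℂ} (hq0 : q ≠ 0) (hz : z ≠ 0) (hq : ‖q‖ < 1) :
    Summable fun n : ℕ => ‖z ^ n * q ^ (n ^ 2)‖ := by
  refine summable_of_ratio_test_tendsto_lt_one (l := 0) one_pos (.of_forall fun n => ?_) ?_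
  · simp [hq0, hz]
  · have h : Tendsto (fun n : ℕ => (‖z‖ * ‖q‖) * (‖q‖ ^ 2) ^ n) atTop (𝓝 ((‖z‖ * ‖q‖) * 0)) :=
      (tendsto_pow_atTop_nhds_zero_of_lt_one (by positivity)
        (pow_lt_one₀ (norm_nonneg _) hq (by norm_num))).const_mul _
    rw [mul_zero] at h
    refine h.congr fun n => ?_
    have h1 : ‖q‖ ≠ 0 := by simpa using hq0
    have h2 : ‖z‖ ≠ 0 := by simpa using hz
    simp only [norm_norm, norm_mul, norm_pow]
    rw [eq_div_iff (by positivity)]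
    ring

lemma theta_summable_s10 {q z : ℂ} (hq0 : q ≠ 0) (hz : z ≠ 0) (hq : ‖q‖ < 1) :
    Summable fun n : ℤ => ‖z ^ n * q ^ (n ^ 2)‖ := by
  refine Summable.of_nat_of_neg ?_ ?_
  · refine (theta_summable_nat_s10 hq0 hz hq).congr fun n => ?_
    norm_cast
  · refine (theta_summable_nat_s10 hq0 (inv_ne_zero hz) hq).congr fun n => ?_
    rw [neg_sq, zpow_neg, inv_pow]
    norm_cast

/-- Jacobi triple product. -/
lemma jtp_s10 {q z : ℂ} (hq0 : q ≠ 0) (hz : z ≠ 0) (hq : ‖q‖ < 1) :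
    ∑' n : ℤ, z ^ n * q ^ (n ^ 2) =
      qPoch (q ^ 2) (q ^ 2) * (qPoch (-(z * q)) (q ^ 2) * qPoch (-(z⁻¹ * q)) (q ^ 2)) := by
  have hQ : ‖q ^ 2‖ < 1 := by
    rw [norm_pow]; exact pow_lt_one₀ (norm_nonneg _) hq (by norm_num)
  obtain ⟨C, hC⟩ := finPoch_bdd hQ
  obtain ⟨D, hD0, hD⟩ := recPoch_bdd hQ
  have hP := qPoch_ne_zero hQ hQ
  have h1 : Tendsto (fun N : ℕ => ∑' n : ℤ, finPoch (q ^ 2) (2 * N) * recPoch (q ^ 2) (N - n) *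
      recPoch (q ^ 2) (N + n) * (z ^ n * q ^ (n ^ 2))) atTop
      (𝓝 (∑' n : ℤ, (qPoch (q ^ 2) (q ^ 2))⁻¹ * (z ^ n * q ^ (n ^ 2)))) := by
    refine tendsto_tsum_of_dominated_convergence
      (bound := fun n : ℤ => C * D * D * ‖z ^ n * q ^ (n ^ 2)‖)
      ((theta_summable_s10 hq0 hz hq).mul_left _) (fun n => ?_) (.of_forall fun N n => ?_)
    · refine Tendsto.mul_const _ ?_
      have t1 : Tendsto (fun N : ℕ => finPoch (q ^ 2) (2 * N)) atTop
          (𝓝 (qPoch (q ^ 2) (q ^ 2))) :=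
        (finPoch_tendsto hQ).comp (tendsto_id.const_mul_atTop' (by norm_num))
      have t := (t1.mul (recPoch_tendsto hQ (-n))).mul (recPoch_tendsto hQ n)
      rw [mul_inv_cancel₀ hP, one_mul] at t
      exact t
    · rw [norm_mul, norm_mul, norm_mul]
      have := hC (2 * N)
      have hC0 : 0 ≤ C := (norm_nonneg _).trans this
      gcongr
      · exact hD _
      · exact hD _
  have h2 : Tendsto (fun N : ℕ => ∏ i ∈ Finset.range N, ((1 + z * q ^ (2 * i + 1)) *
      (1 + z⁻¹ * q ^ (2 * i + 1)))) atTop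
      (𝓝 (qPoch (-(z * q)) (q ^ 2) * qPoch (-(z⁻¹ * q)) (q ^ 2))) := by
    refine ((qPoch_tendsto (-(z * q)) hQ).mul (qPoch_tendsto (-(z⁻¹ * q)) hQ)).congr fun N => ?_
    rw [← Finset.prod_mul_distrib]
    refine Finset.prod_congr rfl fun i _ => ?_
    ring
  have h3 := tendsto_nhds_unique (h1.congr fun N => (finite_jtp_s10 hq0 hz hQ N).tsum_eq) h2
  rw [tsum_mul_left] at h3
  rw [← h3]
  field_simp

lemma qPoch_two (a : ℂ) {q : ℂ} (hq : ‖q‖ < 1) :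
    qPoch a q = qPoch a (q ^ 2) * qPoch (a * q) (q ^ 2) := by
  have hQ : ‖q ^ 2‖ < 1 := by
    rw [norm_pow]; exact pow_lt_one₀ (norm_nonneg _) hq (by norm_num)
  have h1 := (qPoch_tendsto a hq).comp
    ((tendsto_id.const_mul_atTop' (by norm_num)) : Tendsto (fun N : ℕ => 2 * N) atTop atTop)
  refine tendsto_nhds_unique h1
    (((qPoch_tendsto a hQ).mul (qPoch_tendsto (a * q) hQ)).congr fun N => ?_)
  simp only [Function.comp]
  induction N with
  | zero => simp
  | succ N ih =>
    rw [show 2 * (N + 1) = 2 * N + 1 + 1 by ring, Finset.prod_range_succ, Finset.prod_range_succ,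
      Finset.prod_range_succ, Finset.prod_range_succ, ← ih]
    ring

lemma qPoch_three (a : ℂ) {q : ℂ} (hq : ‖q‖ < 1) :
    qPoch a q = qPoch a (q ^ 3) * qPoch (a * q) (q ^ 3) * qPoch (a * q ^ 2) (q ^ 3) := by
  have hQ : ‖q ^ 3‖ < 1 := by
    rw [norm_pow]; exact pow_lt_one₀ (norm_nonneg _) hq (by norm_num)
  have h1 := (qPoch_tendsto a hq).comp
    ((tendsto_id.const_mul_atTop' (by norm_num)) : Tendsto (fun N : ℕ => 3 * N) atTop atTop)
  refine tendsto_nhds_unique h1 ((((qPoch_tendsto a hQ).mul (qPoch_tendsto (a * q) hQ)).mul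
    (qPoch_tendsto (a * q ^ 2) hQ)).congr fun N => ?_)
  simp only [Function.comp]
  induction N with
  | zero => simp
  | succ N ih =>
    rw [show 3 * (N + 1) = 3 * N + 1 + 1 + 1 by ring]
    simp only [Finset.prod_range_succ]
    rw [← ih]
    ring

lemma qPoch_neg (a : ℂ) {q : ℂ} (hq : ‖q‖ < 1) :
    qPoch a q * qPoch (-a) q = qPoch (a ^ 2) (q ^ 2) := by
  have hQ : ‖q ^ 2‖ < 1 := by
    rw [norm_pow]; exact pow_lt_one₀ (norm_nonneg _) hq (by norm_num)
  refine tendsto_nhds_unique (((qPoch_tendsto a hq).mul (qPoch_tendsto (-a) hq)).congr fun N => ?_)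
    (qPoch_tendsto (a ^ 2) hQ)
  rw [← Finset.prod_mul_distrib]
  refine Finset.prod_congr rfl fun i _ => ?_
  ring

/-- The theta series. -/
noncomputable def thetaS (q z : ℂ) : ℂ := ∑' n : ℤ, z ^ n * q ^ (n ^ 2)

lemma thetaS_eq {q z Q a b : ℂ} (hq0 : q ≠ 0) (hz : z ≠ 0) (hq : ‖q‖ < 1)
    (hQ : q ^ 2 = Q) (ha : -(z * q) = a) (hb : -(z⁻¹ * q) = b) :
    thetaS q z = qPoch Q Q * (qPoch a Q * qPoch b Q) := by
  subst hQ ha hb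
  exact jtp_s10 hq0 hz hq

lemma thetaS_shift {q z : ℂ} (hq0 : q ≠ 0) (hz : z ≠ 0) :
    thetaS q z = z * q * thetaS q (z * q ^ 2) := by
  rw [thetaS, thetaS, ← tsum_mul_left, ← (Equiv.addRight (1 : ℤ)).tsum_eq]
  refine tsum_congr fun n => ?_
  simp only [Equiv.coe_addRight]
  rw [show (n + 1) ^ 2 = n ^ 2 + 2 * n + 1 by ring, zpow_add₀ hq0, zpow_add₀ hq0, zpow_add₀ hz,
    mul_zpow, zpow_mul]
  simp only [zpow_one]
  norm_cast
  ring

lemma thetaS_mul {p z : ℂ} (hp0 : p ≠ 0) (hz : z ≠ 0) (hp : ‖p‖ < 1) :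
    thetaS p z * thetaS p 1 = thetaS (p ^ 2) z * thetaS (p ^ 2) z⁻¹ +
      p * (thetaS (p ^ 2) (z * p ^ 2) * thetaS (p ^ 2) (z⁻¹ * p ^ 2)) := by
  have hP : ‖p ^ 2‖ < 1 := by
    rw [norm_pow]; exact pow_lt_one₀ (norm_nonneg _) hp (by norm_num)
  have hP0 : p ^ 2 ≠ 0 := pow_ne_zero _ hp0
  have hz' : z⁻¹ ≠ 0 := inv_ne_zero hz
  have prodS : ∀ {r a b : ℂ}, r ≠ 0 → ‖r‖ < 1 → a ≠ 0 → b ≠ 0 →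
      HasSum (fun x : ℤ × ℤ => (a ^ x.1 * r ^ (x.1 ^ 2)) * (b ^ x.2 * r ^ (x.2 ^ 2)))
        (thetaS r a * thetaS r b) := by
    intro r a b hr0 hr ha hb
    have h1 := theta_summable_s10 hr0 ha hr
    have h2 := theta_summable_s10 hr0 hb hr
    rw [thetaS, thetaS, tsum_mul_tsum_of_summable_norm h1 h2]
    exact (summable_mul_of_summable_norm h1 h2).hasSum
  have H := prodS hp0 hp hz one_ne_zero
  have E := prodS hP0 hP hz hz'
  have O := (prodS hP0 hP (mul_ne_zero hz hP0) (mul_ne_zero hz' hP0)).mul_left p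
  let ge : ℤ × ℤ → ℤ × ℤ := fun x => (x.1 - x.2, x.1 + x.2)
  let go : ℤ × ℤ → ℤ × ℤ := fun x => (x.1 - x.2, x.1 + x.2 + 1)
  have ie : Function.Injective ge := by
    rintro ⟨a, b⟩ ⟨c, d⟩ h
    simp only [ge, Prod.mk.injEq] at h ⊢
    omega
  have io : Function.Injective go := by
    rintro ⟨a, b⟩ ⟨c, d⟩ h
    simp only [go, Prod.mk.injEq] at h ⊢
    omega
  have hc : IsCompl (Set.range ge) (Set.range go) := by
    refine ⟨Set.disjoint_left.2 ?_, codisjoint_iff.2 (Set.eq_univ_of_forall ?_)⟩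
    · rintro _ ⟨⟨a, b⟩, rfl⟩ ⟨⟨c, d⟩, h⟩
      simp only [ge, go, Prod.mk.injEq] at h
      omega
    · rintro ⟨n, m⟩
      rcases Int.even_or_odd' (n + m) with ⟨k, hk | hk⟩
      · refine Or.inl ⟨(k, m - k), ?_⟩
        simp only [ge, Prod.mk.injEq]
        omega
      · refine Or.inr ⟨(k, m - 1 - k), ?_⟩
        simp only [go, Prod.mk.injEq]
        omega
  set F : ℤ × ℤ → ℂ := fun x => (z ^ x.1 * p ^ (x.1 ^ 2)) * (1 ^ x.2 * p ^ (x.2 ^ 2)) with hF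
  have E' : HasSum (F ∘ ge) (thetaS (p ^ 2) z * thetaS (p ^ 2) z⁻¹) := by
    have : F ∘ ge = fun x : ℤ × ℤ =>
        (z ^ x.1 * (p ^ 2) ^ (x.1 ^ 2)) * (z⁻¹ ^ x.2 * (p ^ 2) ^ (x.2 ^ 2)) := by
      funext ⟨s, t⟩
      simp only [F, ge, Function.comp, one_zpow, one_mul, inv_zpow, zpow_sub₀ hz]
      have h1 : p ^ ((s - t) ^ 2) * p ^ ((s + t) ^ 2) =
          (p ^ 2) ^ (s ^ 2) * (p ^ 2) ^ (t ^ 2) := by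
        rw [← zpow_natCast p 2, ← zpow_mul, ← zpow_mul, ← zpow_add₀ hp0, ← zpow_add₀ hp0]
        congr 1
        push_cast
        ring
      linear_combination z ^ s / z ^ t * h1
    rw [this]
    exact E
  have O' : HasSum (F ∘ go)
      (p * (thetaS (p ^ 2) (z * p ^ 2) * thetaS (p ^ 2) (z⁻¹ * p ^ 2))) := by
    have : F ∘ go = fun x : ℤ × ℤ => p * (((z * p ^ 2) ^ x.1 * (p ^ 2) ^ (x.1 ^ 2)) *
        ((z⁻¹ * p ^ 2) ^ x.2 * (p ^ 2) ^ (x.2 ^ 2))) := by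
      funext ⟨s, t⟩
      simp only [F, go, Function.comp, one_zpow, one_mul, mul_zpow, inv_zpow, zpow_sub₀ hz]
      have h1 : p ^ ((s - t) ^ 2) * p ^ ((s + t + 1) ^ 2) =
          p * ((p ^ 2) ^ s * (p ^ 2) ^ (s ^ 2) * ((p ^ 2) ^ t * (p ^ 2) ^ (t ^ 2))) := by
        rw [← zpow_natCast p 2]
        simp only [← zpow_mul, ← zpow_add₀ hp0]
        rw [← zpow_one_add₀ hp0]
        congr 1
        push_cast
        ring
      linear_combination z ^ s / z ^ t * h1
    rw [this]
    exact O
  exact H.unique ((ie.hasSum_range_iff.2 E').add_isCompl hc (io.hasSum_range_iff.2 O'))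

theorem two_q_x_two_dissection (q : ℂ) (hq : ‖q‖ < 1) :
    2 * q * x q =
      -2 * q ^ 2 * qPoch (q ^ 2) (q ^ 2) ^ 2 * qPoch (q ^ 12) (q ^ 12) ^ 6 /
          (qPoch (q ^ 6) (q ^ 6) ^ 6 * qPoch (q ^ 4) (q ^ 4) ^ 2) +
        2 * q * qPoch (q ^ 4) (q ^ 4) ^ 2 * qPoch (q ^ 12) (q ^ 12) ^ 2 /
          qPoch (q ^ 6) (q ^ 6) ^ 4 := by
  rcases eq_or_ne q 0 with rfl | hq0
  · simp
  have hn : ∀ k : ℕ, k ≠ 0 → ‖q ^ k‖ < 1 := fun k hk => by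
    rw [norm_pow]; exact pow_lt_one₀ (norm_nonneg _) hq hk
  have h0 : ∀ k : ℕ, q ^ k ≠ 0 := fun k => pow_ne_zero _ hq0
  have T1 : thetaS (q ^ 3) (-q ^ 2) =
      qPoch (q ^ 6) (q ^ 6) * (qPoch (q ^ 5) (q ^ 6) * qPoch q (q ^ 6)) := by
    exact thetaS_eq (h0 3) (neg_ne_zero.2 (h0 2)) (hn 3 (by norm_num)) (by ring) (by field_simp) (by field_simp)
  have T2 : thetaS (q ^ 3) 1 =
      qPoch (q ^ 6) (q ^ 6) * (qPoch (-q ^ 3) (q ^ 6) * qPoch (-q ^ 3) (q ^ 6)) := by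
    exact thetaS_eq (h0 3) one_ne_zero (hn 3 (by norm_num)) (by ring) (by field_simp) (by field_simp)
  have S1 : thetaS (q ^ 6) (-q ^ 2) =
      qPoch (q ^ 12) (q ^ 12) * (qPoch (q ^ 8) (q ^ 12) * qPoch (q ^ 4) (q ^ 12)) := by
    exact thetaS_eq (h0 6) (neg_ne_zero.2 (h0 2)) (hn 6 (by norm_num)) (by ring) (by field_simp) (by field_simp)
  have S1' : thetaS (q ^ 6) (-q ^ 2)⁻¹ =
      qPoch (q ^ 12) (q ^ 12) * (qPoch (q ^ 4) (q ^ 12) * qPoch (q ^ 8) (q ^ 12)) := by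
    exact thetaS_eq (h0 6) (inv_ne_zero (neg_ne_zero.2 (h0 2))) (hn 6 (by norm_num)) (by ring) (by field_simp) (by field_simp)
  have S2 : thetaS (q ^ 6) (-q ^ 4) =
      qPoch (q ^ 12) (q ^ 12) * (qPoch (q ^ 10) (q ^ 12) * qPoch (q ^ 2) (q ^ 12)) := by
    exact thetaS_eq (h0 6) (neg_ne_zero.2 (h0 4)) (hn 6 (by norm_num)) (by ring) (by field_simp) (by field_simp)
  have S2' : thetaS (q ^ 6) (-q ^ 4)⁻¹ =
      qPoch (q ^ 12) (q ^ 12) * (qPoch (q ^ 2) (q ^ 12) * qPoch (q ^ 10) (q ^ 12)) := by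
    exact thetaS_eq (h0 6) (inv_ne_zero (neg_ne_zero.2 (h0 4))) (hn 6 (by norm_num)) (by ring) (by field_simp) (by field_simp)
  have M := thetaS_mul (h0 3) (neg_ne_zero.2 (h0 2)) (hn 3 (by norm_num))
  have Sh := thetaS_shift (h0 6) (inv_ne_zero (neg_ne_zero.2 (h0 4)))
  rw [show (-q ^ 4)⁻¹ * (q ^ 6) ^ 2 = -q ^ 8 by field_simp] at Sh
  rw [show (q ^ 3) ^ 2 = q ^ 6 by ring, show (-q ^ 2)⁻¹ * q ^ 6 = -q ^ 4 by field_simp,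
    show -q ^ 2 * q ^ 6 = -q ^ 8 by ring] at M
  have Sh' : thetaS (q ^ 6) (-q ^ 8) * q ^ 2 = -thetaS (q ^ 6) (-q ^ 4)⁻¹ := by
    rw [Sh]; field_simp
  rw [S2'] at Sh'
  rw [T1, T2, S1, S1', S2] at M
  have D1 := qPoch_three q (hn 2 (by norm_num))
  rw [show (q ^ 2) ^ 3 = q ^ 6 by ring, show q * q ^ 2 = q ^ 3 by ring,
    show q * (q ^ 2) ^ 2 = q ^ 5 by ring] at D1
  have D2 := qPoch_neg (q ^ 3) (hn 6 (by norm_num))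
  rw [show (q ^ 3) ^ 2 = q ^ 6 by ring, show (q ^ 6) ^ 2 = q ^ 12 by ring] at D2
  have D3 := qPoch_two (q ^ 6) (hn 6 (by norm_num))
  rw [show q ^ 6 * q ^ 6 = q ^ 12 by ring, show (q ^ 6) ^ 2 = q ^ 12 by ring] at D3
  have D4 := qPoch_three (q ^ 4) (hn 4 (by norm_num))
  rw [show (q ^ 4) ^ 3 = q ^ 12 by ring, show q ^ 4 * q ^ 4 = q ^ 8 by ring,
    show q ^ 4 * (q ^ 4) ^ 2 = q ^ 12 by ring] at D4
  have D5 := qPoch_two (q ^ 2) (hn 2 (by norm_num))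
  rw [show q ^ 2 * q ^ 2 = q ^ 4 by ring, show (q ^ 2) ^ 2 = q ^ 4 by ring] at D5
  have D6 := qPoch_three (q ^ 2) (hn 4 (by norm_num))
  rw [show (q ^ 4) ^ 3 = q ^ 12 by ring, show q ^ 2 * q ^ 4 = q ^ 6 by ring,
    show q ^ 2 * (q ^ 4) ^ 2 = q ^ 10 by ring] at D6
  have nz : ∀ a b : ℕ, a ≠ 0 → b ≠ 0 → qPoch (q ^ a) (q ^ b) ≠ 0 := fun a b ha hb =>
    qPoch_ne_zero (hn a ha) (hn b hb)
  have n1 := nz 3 6 (by norm_num) (by norm_num)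
  have n2 := nz 6 12 (by norm_num) (by norm_num)
  have n3 := nz 12 12 (by norm_num) (by norm_num)
  have n4 := nz 4 12 (by norm_num) (by norm_num)
  have n5 := nz 8 12 (by norm_num) (by norm_num)
  rw [x, D1, D5, D6]
  have n6 := nz 4 4 (by norm_num) (by norm_num)
  rw [D4] at n6 ⊢
  rw [D3] at M ⊢
  generalize qPoch (q ^ 12) (q ^ 12) = e at *
  generalize qPoch (q ^ 6) (q ^ 12) = g at *
  generalize qPoch (q ^ 4) (q ^ 12) = c4 at *
  generalize qPoch (q ^ 8) (q ^ 12) = c8 at *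
  generalize qPoch (q ^ 2) (q ^ 12) = c2 at *
  generalize qPoch (q ^ 10) (q ^ 12) = c10 at *
  generalize qPoch (q ^ 3) (q ^ 6) = b at *
  generalize qPoch (-q ^ 3) (q ^ 6) = d at *
  generalize qPoch (q ^ 5) (q ^ 6) = k at *
  generalize qPoch q (q ^ 6) = l at *
  generalize thetaS (q ^ 6) (-q ^ 8) = w at *
  have M2 : (g * e) * (k * l) * (g * e * d ^ 2) =
      e ^ 2 * c4 ^ 2 * c8 ^ 2 - q * e ^ 2 * c2 ^ 2 * c10 ^ 2 := by
    linear_combination M + q * (e * (c10 * c2)) * Sh'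
  have hd : d ≠ 0 := fun h => n2 (by rw [← D2, h, mul_zero])
  have hc4 : c4 ≠ 0 := n4
  have K : l * k * d ^ 2 * g ^ 2 = c4 ^ 2 * c8 ^ 2 - q * c2 ^ 2 * c10 ^ 2 := by
    refine mul_left_cancel₀ (pow_ne_zero 2 n3) ?_
    linear_combination M2
  have R : l * b * k / b ^ 3 = (l * k * d ^ 2 * g ^ 2) / g ^ 4 := by
    rw [← D2]
    field_simp
  rw [R, K]
  field_simp
  ring
end

section
/- Let ζ = e^{2πi/3}. For every complex number q with |q| < 1, one has 1/((ζ q^2; q^2)_∞ (q; q^2)_∞ (ζ^{-1} q^2; q^2)_∞ (q^3; q^6)_∞) = ( (−q^3; q^3)_∞ / (q^6; q^6)_∞ ) · ∑_{n=0}^∞ q^{n(n+1)/2}. -/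
/-- `ζ = e^{2πi/3}`, a primitive cube root of unity. -/
noncomputable def ζ : ℂ := Complex.exp (2 * Real.pi * Complex.I / 3)

lemma qP_summable (a q : ℂ) (hq : ‖q‖ < 1) : Summable (fun n : ℕ => ‖-(a * q ^ n)‖) := by
  simp only [norm_neg, norm_mul, norm_pow]
  exact (summable_geometric_of_lt_one (norm_nonneg _) hq).mul_left _

lemma qP_mult (a q : ℂ) (hq : ‖q‖ < 1) : Multipliable (fun n : ℕ => 1 - a * q ^ n) := by
  simp only [sub_eq_add_neg]
  exact multipliable_one_add_of_summable (qP_summable a q hq)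

lemma one_sub_ne (x : ℂ) (hx : ‖x‖ < 1) : 1 - x ≠ 0 := by
  intro h
  have : x = 1 := (sub_eq_zero.mp h).symm
  rw [this] at hx
  simp at hx

lemma qP_ne (a q : ℂ) (hq : ‖q‖ < 1) (ha : ‖a‖ < 1) : qPoch a q ≠ 0 := by
  unfold qPoch
  simp only [sub_eq_add_neg]
  apply tprod_one_add_ne_zero_of_summable
  · intro n
    rw [← sub_eq_add_neg]
    apply one_sub_ne
    rw [norm_mul, norm_pow]
    have := pow_le_one₀ (n := n) (norm_nonneg q) hq.le
    nlinarith [norm_nonneg a]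
  · exact qP_summable a q hq

lemma pow_lt (q : ℂ) (hq : ‖q‖ < 1) (k : ℕ) (hk : k ≠ 0) : ‖q ^ k‖ < 1 := by
  rw [norm_pow]
  exact pow_lt_one₀ (norm_nonneg _) hq hk

lemma zeta_cube : ζ ^ 3 = 1 := by
  unfold ζ
  rw [← Complex.exp_nat_mul]
  rw [← Complex.exp_two_pi_mul_I]
  congr 1
  push_cast
  ring

lemma zeta_ne_one : ζ ≠ 1 := by
  intro h
  have h2 : IsPrimitiveRoot ζ 3 := by
    have := Complex.isPrimitiveRoot_exp 3 (by norm_num)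
    simpa [ζ] using this
  exact h2.ne_one (by norm_num) h

lemma zeta_prod (x : ℂ) : (1 - ζ * x) * (1 - ζ⁻¹ * x) * (1 - x) = 1 - x ^ 3 := by
  have h3 := zeta_cube
  have h1 : ζ - 1 ≠ 0 := sub_ne_zero.mpr zeta_ne_one
  have hs : ζ ^ 2 + ζ + 1 = 0 := by
    apply mul_left_cancel₀ h1
    linear_combination h3
  have hi : ζ⁻¹ = ζ ^ 2 := by
    apply inv_eq_of_mul_eq_one_right
    linear_combination h3
  rw [hi]
  linear_combination (-x + x^2) * hs + (x^2-x^3) * h3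

lemma zeta_qP (q : ℂ) (hq : ‖q‖ < 1) :
    qPoch (ζ * q) q * qPoch (ζ⁻¹ * q) q * qPoch q q = qPoch (q ^ 3) (q ^ 3) := by
  unfold qPoch
  rw [← (qP_mult _ _ hq).tprod_mul (qP_mult _ _ hq),
    ← ((qP_mult _ _ hq).mul (qP_mult _ _ hq)).tprod_mul (qP_mult _ _ hq)]
  apply tprod_congr
  intro n
  have := zeta_prod (q * q ^ n)
  rw [← mul_assoc, ← mul_assoc] at this
  rw [this]
  ring

lemma qP_split (q : ℂ) (hq : ‖q‖ < 1) :
    qPoch q (q ^ 2) * qPoch (q ^ 2) (q ^ 2) = qPoch q q := by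
  have h2 := pow_lt q hq 2 (by norm_num)
  have e1 : ∀ k : ℕ, 1 - q * (q ^ 2) ^ k = 1 - q * q ^ (2 * k) := fun k => by ring
  have e2 : ∀ k : ℕ, 1 - q ^ 2 * (q ^ 2) ^ k = 1 - q * q ^ (2 * k + 1) := fun k => by ring
  have m1 := qP_mult q (q ^ 2) h2
  have m2 := qP_mult (q ^ 2) (q ^ 2) h2
  unfold qPoch
  simp only [e1] at m1 ⊢
  simp only [e2] at m2 ⊢
  exact tprod_even_mul_odd (f := fun k => 1 - q * q ^ k) m1 m2

lemma euler (q : ℂ) (hq : ‖q‖ < 1) : qPoch (-q) q * qPoch q (q ^ 2) = 1 := by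
  have h2 := pow_lt q hq 2 (by norm_num)
  have h : qPoch q q * qPoch (-q) q = qPoch (q ^ 2) (q ^ 2) := by
    unfold qPoch
    rw [← (qP_mult _ _ hq).tprod_mul (qP_mult _ _ hq)]
    exact tprod_congr fun n => by ring
  have hn := qP_ne (q ^ 2) (q ^ 2) h2 h2
  rw [← qP_split q hq] at h
  apply mul_right_cancel₀ hn
  linear_combination h

noncomputable def shP (q : ℂ) (n : ℕ) : ℂ :=
  (∏ j ∈ Finset.range n, (1 - q ^ 2 * (q ^ 2) ^ j)) / ∏ j ∈ Finset.range n, (1 - q * (q ^ 2) ^ j)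

lemma f_ne (q : ℂ) (hq : ‖q‖ < 1) (n : ℕ) (hn : n ≠ 0) : 1 - q ^ n ≠ 0 :=
  one_sub_ne _ (pow_lt q hq n hn)

lemma shP_succ (q : ℂ) (n : ℕ) :
    shP q (n + 1) = shP q n * ((1 - q ^ (2 * n + 2)) / (1 - q ^ (2 * n + 1))) := by
  unfold shP
  rw [Finset.prod_range_succ, Finset.prod_range_succ, mul_div_mul_comm]
  congr 3 <;> ring

lemma shP_ne (q : ℂ) (hq : ‖q‖ < 1) (n : ℕ) : shP q n ≠ 0 := by
  induction n with
  | zero => simp [shP]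
  | succ n ih =>
    rw [shP_succ]
    exact mul_ne_zero ih (div_ne_zero (f_ne q hq _ (by omega)) (f_ne q hq _ (by omega)))

lemma shanks_tele (q : ℂ) (hq : ‖q‖ < 1) (n m : ℕ) :
    ∑ s ∈ Finset.range m, (shP q s)⁻¹ * q ^ (s * (2 * n + 1)) *
      (q ^ (2 * s) - q ^ (2 * n + 2 * s + 2) - 1 + q ^ (2 * n + 1)) =
    q ^ (m * (2 * n + 1)) * (1 - q ^ (2 * m)) * (shP q m)⁻¹ := by
  induction m with
  | zero => simp
  | succ m ih =>
    rw [Finset.sum_range_succ, ih, shP_succ]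
    have h1 := f_ne q hq (2 * m + 2) (by omega)
    have h2 := f_ne q hq (2 * m + 1) (by omega)
    have h3 := shP_ne q hq m
    have : (shP q m * ((1 - q ^ (2 * m + 2)) / (1 - q ^ (2 * m + 1))))⁻¹ * (1 - q ^ (2 * m + 2))
        = (shP q m)⁻¹ * (1 - q ^ (2 * m + 1)) := by
      field_simp
    rw [show 2 * (m + 1) = 2 * m + 2 by ring]
    linear_combination (-q ^ ((m + 1) * (2 * n + 1))) * this

lemma tri1 (n : ℕ) : (2 * n + 1) * (2 * n + 1 + 1) / 2 = (n + 1) * (2 * n + 1) := by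
  apply Nat.div_eq_of_eq_mul_left (by norm_num); ring

lemma tri2 (n : ℕ) : (2 * n + 1 + 1) * (2 * n + 1 + 1 + 1) / 2 = (n + 1) * (2 * (n + 1) + 1) := by
  apply Nat.div_eq_of_eq_mul_left (by norm_num); ring

lemma shanks (q : ℂ) (hq : ‖q‖ < 1) (n : ℕ) :
    ∑ s ∈ Finset.range (2 * n + 1), q ^ (s * (s + 1) / 2) =
    ∑ s ∈ Finset.range (n + 1), shP q n * (shP q s)⁻¹ * q ^ (s * (2 * n + 1)) := by
  induction n with
  | zero => simp [shP]
  | succ n ih =>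
    rw [show 2 * (n + 1) + 1 = 2 * n + 1 + 1 + 1 by ring, Finset.sum_range_succ,
      Finset.sum_range_succ, ih, tri1, tri2, Finset.sum_range_succ _ (n + 1),
      mul_inv_cancel₀ (shP_ne q hq _), one_mul, show 2 * n + 1 + 1 + 1 = 2 * (n + 1) + 1 by ring]
    congr 1
    have h1 := f_ne q hq (2 * n + 2) (by omega)
    have h2 := f_ne q hq (2 * n + 1) (by omega)
    have h3 := shP_ne q hq n
    have key := shanks_tele q hq n (n + 1)
    have e : ∀ s ∈ Finset.range (n + 1),
        shP q (n + 1) * (shP q s)⁻¹ * q ^ (s * (2 * (n + 1) + 1)) =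
        shP q n * (shP q s)⁻¹ * q ^ (s * (2 * n + 1)) + shP q n / (1 - q ^ (2 * n + 1)) *
        ((shP q s)⁻¹ * q ^ (s * (2 * n + 1)) *
        (q ^ (2 * s) - q ^ (2 * n + 2 * s + 2) - 1 + q ^ (2 * n + 1))) := by
      intro s _
      have h4 := shP_ne q hq s
      rw [shP_succ]
      field_simp
      ring
    rw [Finset.sum_congr rfl e, Finset.sum_add_distrib, ← Finset.mul_sum, key, shP_succ]
    congr 1
    rw [show 2 * (n + 1) = 2 * n + 2 by ring]
    field_simp

open Filter Topology in
lemma gauss (q : ℂ) (hq : ‖q‖ < 1) :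
    ∑' n : ℕ, q ^ (n * (n + 1) / 2) = qPoch (q ^ 2) (q ^ 2) / qPoch q (q ^ 2) := by
  have h2 := pow_lt q hq 2 (by norm_num)
  have hL1 := qP_ne (q ^ 2) (q ^ 2) h2 h2
  have hL2 := qP_ne q (q ^ 2) h2 hq
  have hP : Tendsto (shP q) atTop (𝓝 (qPoch (q ^ 2) (q ^ 2) / qPoch q (q ^ 2))) :=
    (qP_mult (q ^ 2) (q ^ 2) h2).hasProd.tendsto_prod_nat.div
      (qP_mult q (q ^ 2) h2).hasProd.tendsto_prod_nat hL2
  have hPi := hP.inv₀ (div_ne_zero hL1 hL2)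
  obtain ⟨C, hC⟩ := (Metric.isBounded_range_of_tendsto _ hP).exists_norm_le
  obtain ⟨D, hD⟩ := (Metric.isBounded_range_of_tendsto _ hPi).exists_norm_le
  have hC' : ∀ n, ‖shP q n‖ ≤ C := fun n => hC _ ⟨n, rfl⟩
  have hD' : ∀ n, ‖(shP q n)⁻¹‖ ≤ D := fun n => hD _ ⟨n, rfl⟩
  have hC0 : 0 ≤ C := (norm_nonneg _).trans (hC' 0)
  have hD0 : 0 ≤ D := (norm_nonneg _).trans (hD' 0)
  have hsum : Summable (fun n : ℕ => q ^ (n * (n + 1) / 2)) := by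
    apply Summable.of_norm_bounded (summable_geometric_of_lt_one (norm_nonneg q) hq)
    intro n
    rw [norm_pow]
    apply pow_le_pow_of_le_one (norm_nonneg _) hq.le
    rcases n with _ | n
    · simp
    · rw [Nat.le_div_iff_mul_le (by norm_num)]
      nlinarith
  have t1 : Tendsto (fun n : ℕ => ∑ s ∈ Finset.range (2 * n + 1), q ^ (s * (s + 1) / 2)) atTop
      (𝓝 (∑' n : ℕ, q ^ (n * (n + 1) / 2))) :=
    hsum.hasSum.tendsto_sum_nat.comp (tendsto_atTop_mono (fun n => by simp only [id]; omega) tendsto_id)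
  have t2 : Tendsto (fun n : ℕ => ∑ s ∈ Finset.range n,
      shP q n * (shP q (s + 1))⁻¹ * q ^ ((s + 1) * (2 * n + 1))) atTop (𝓝 0) := by
    have hz : Tendsto (fun n : ℕ => C * D * (n * ‖q‖ ^ n)) atTop (𝓝 0) := by
      simpa using (tendsto_self_mul_const_pow_of_lt_one (norm_nonneg q) hq).const_mul (C * D)
    apply squeeze_zero_norm _ hz
    intro n
    calc _ ≤ ∑ s ∈ Finset.range n, C * D * ‖q‖ ^ n := by
          apply norm_sum_le_of_le
          intro s _
          rw [norm_mul, norm_mul, norm_pow]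
          have : ‖q‖ ^ ((s + 1) * (2 * n + 1)) ≤ ‖q‖ ^ n :=
            pow_le_pow_of_le_one (norm_nonneg _) hq.le (by nlinarith [Nat.zero_le (s * n)])
          exact mul_le_mul (mul_le_mul (hC' _) (hD' _) (norm_nonneg _) hC0) this
            (by positivity) (by positivity)
      _ = _ := by rw [Finset.sum_const, Finset.card_range, nsmul_eq_mul]; ring
  have t3 := t2.add hP
  rw [zero_add] at t3
  refine tendsto_nhds_unique t1 (t3.congr fun n => ?_)
  rw [shanks q hq, Finset.sum_range_succ']
  simp [shP]

theorem rank_generating_function_at_cube_root (q : ℂ) (hq : ‖q‖ < 1) :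
    1 / (qPoch (ζ * q ^ 2) (q ^ 2) * qPoch q (q ^ 2) * qPoch (ζ⁻¹ * q ^ 2) (q ^ 2) *
        qPoch (q ^ 3) (q ^ 6)) =
      qPoch (-(q ^ 3)) (q ^ 3) / qPoch (q ^ 6) (q ^ 6) *
        ∑' n : ℕ, q ^ (n * (n + 1) / 2) := by
  have h2 := pow_lt q hq 2 (by norm_num)
  have h3 := pow_lt q hq 3 (by norm_num)
  have h6 := pow_lt q hq 6 (by norm_num)
  have hz := zeta_qP (q ^ 2) h2
  have he := euler (q ^ 3) h3
  rw [show (q ^ 2) ^ 3 = q ^ 6 by ring] at hz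
  rw [show (q ^ 3) ^ 2 = q ^ 6 by ring] at he
  rw [gauss q hq]
  have n1 := qP_ne q (q ^ 2) h2 hq
  have n2 := qP_ne (q ^ 3) (q ^ 6) h6 h3
  have n3 := qP_ne (q ^ 6) (q ^ 6) h6 h6
  have n4 := qP_ne (q ^ 2) (q ^ 2) h2 h2
  rw [eq_div_of_mul_eq n2 he]
  rw [← hz] at n3 ⊢
  have n5 := left_ne_zero_of_mul (left_ne_zero_of_mul n3)
  have n6 := right_ne_zero_of_mul (left_ne_zero_of_mul n3)
  field_simp
end

section
/- For i = 0, 1, 2 and natural numbers n, let N_d(i, 3; n) denote the number of pairs of partitions (α, β) with |α| + |β| = n, where α is an arbitrary partition, β is a partition into parts not congruent to 1 or 5 modulo 6, and the integer (number of even parts of α) − (number of even parts of β) is congruent to i modulo 3. Then for every natural number n, N_d(0, 3; 3n+2) = N_d(1, 3; 3n+2) = N_d(2, 3; 3n+2). -/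
open Finset

/-- `Nd i n` is the number of pairs of partitions `(α, β)` with `|α| + |β| = n`, where `α`
is arbitrary, all parts of `β` are not congruent to `1` or `5` mod `6`, and the pd-rank
(number of even parts of `α` minus number of even parts of `β`) is congruent to `i` mod `3`. -/
def Nd (i : ℕ) (n : ℕ) : ℕ :=
  ∑ a ∈ Finset.range (n + 1),
    ((Finset.univ : Finset (Nat.Partition a × Nat.Partition (n - a))).filter
      (fun pb =>
        (∀ k ∈ pb.2.parts, k % 6 ≠ 1 ∧ k % 6 ≠ 5) ∧
        (((pb.1.parts.filter (fun k => k % 2 = 0)).card : ℤ) -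
            ((pb.2.parts.filter (fun k => k % 2 = 0)).card : ℤ)) ≡ (i : ℤ) [ZMOD 3])).card

open PowerSeries
open scoped PowerSeries.WithPiTopology

namespace PdRank

/-! ### A finite form of the Gauss identity for triangular numbers (Shanks) -/

section Shanks
variable {R : Type*} [CommRing R] (x : R)

def oddProd (n : ℕ) : R := ∏ j ∈ range n, (1 - x ^ (2 * j + 1))

def W (n s : ℕ) : R :=
  (∏ k ∈ Ico s n, (1 - x ^ (2 * k + 2))) * oddProd x s * x ^ (s * (2 * n + 1))

lemma W_succ_left {n s : ℕ} (h : s ≤ n) :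
    W x (n + 1) s = W x n s * (1 - x ^ (2 * n + 2)) * x ^ (2 * s) := by
  unfold W
  rw [prod_Ico_succ_top h]
  ring

lemma W_succ_right {n s : ℕ} (h : s < n) :
    W x n (s + 1) * (1 - x ^ (2 * s + 2)) = W x n s * (1 - x ^ (2 * s + 1)) * x ^ (2 * n + 1) := by
  unfold W oddProd
  rw [prod_eq_prod_Ico_succ_bot h, prod_range_succ]
  ring

lemma W_self (n : ℕ) : W x n n = oddProd x n * x ^ (n * (2 * n + 1)) := by
  simp [W]

lemma sum_W_diff (n m : ℕ) (h : m ≤ n) :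
    ∑ s ∈ range m, (W x (n + 1) s - (1 - x ^ (2 * n + 1)) * W x n s)
      = W x n m * (1 - x ^ (2 * m)) := by
  induction m with
  | zero => simp
  | succ m ih =>
    rw [sum_range_succ, ih (by omega), W_succ_left x (by omega), show 2 * (m + 1) = 2 * m + 2 by ring,
      W_succ_right x (by omega)]
    ring

lemma tri_even (n : ℕ) : (2 * n) * (2 * n + 1) / 2 = n * (2 * n + 1) := by
  rw [mul_assoc]; exact Nat.mul_div_cancel_left _ (by norm_num)

lemma tri_odd (n : ℕ) : (2 * n + 1) * (2 * n + 1 + 1) / 2 = n * (2 * n + 1) + (2 * n + 1) := by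
  rw [show (2 * n + 1) * (2 * n + 1 + 1) = 2 * (n * (2 * n + 1) + (2 * n + 1)) by ring]
  exact Nat.mul_div_cancel_left _ (by norm_num)

theorem shanks (n : ℕ) :
    oddProd x n * ∑ s ∈ range (2 * n), x ^ (s * (s + 1) / 2) = ∑ s ∈ range n, W x n s := by
  induction n with
  | zero => simp
  | succ n ih =>
    have h := sum_W_diff x n n le_rfl
    rw [sum_sub_distrib, ← mul_sum, ← ih, W_self] at h
    rw [show 2 * (n + 1) = 2 * n + 1 + 1 by ring, sum_range_succ, sum_range_succ, tri_even,
      tri_odd, sum_range_succ, W_succ_left x le_rfl, W_self]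
    have ho : oddProd x (n + 1) = oddProd x n * (1 - x ^ (2 * n + 1)) := by
      simp [oddProd, prod_range_succ]
    rw [ho]
    linear_combination -h

lemma sum_W_eq (n : ℕ) (hn : 0 < n) :
    x ^ (2 * n + 1) ∣ ∑ s ∈ range n, W x n s - ∏ k ∈ range n, (1 - x ^ (2 * k + 2)) := by
  obtain ⟨m, rfl⟩ : ∃ m, n = m + 1 := ⟨n - 1, by omega⟩
  rw [sum_range_succ']
  have : W x (m + 1) 0 = ∏ k ∈ range (m + 1), (1 - x ^ (2 * k + 2)) := by
    simp [W, oddProd]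
  rw [this, add_sub_cancel_right]
  refine dvd_sum fun s _ => ?_
  unfold W
  refine Dvd.dvd.mul_left (pow_dvd_pow _ ?_) _
  nlinarith

end Shanks

/-! ### Infinite products -/

lemma tendsto_order {u : ℕ → ℂ⟦X⟧} (hu : ∀ i, X ^ i ∣ u i) :
    Filter.Tendsto (fun i => (u i).order) Filter.atTop (nhds ⊤) := by
  refine ENat.tendsto_nhds_top_iff_natCast_lt.mpr
    (fun n ↦ Filter.eventually_atTop.mpr ⟨n + 1, fun m hm => ?_⟩)
  have := X_pow_dvd_iff.mp (hu m)
  refine lt_of_lt_of_le ?_ (nat_le_order (u m) m this)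
  exact_mod_cast hm

lemma multipliable_of_dvd {v : ℕ → ℂ⟦X⟧} (hv : ∀ i, X ^ (i + 1) ∣ v i - 1) :
    Multipliable v := by
  have := WithPiTopology.multipliable_one_add_of_tendsto_order_atTop_nhds_top
    (R := ℂ) (f := fun i => v i - 1)
    (tendsto_order fun i => (pow_dvd_pow _ (Nat.le_succ i)).trans (hv i))
  simpa using this

lemma constantCoeff_tprod {v : ℕ → ℂ⟦X⟧} (hv : ∀ i, X ^ (i + 1) ∣ v i - 1) :
    constantCoeff (∏' i, v i) = 1 := by
  rw [(multipliable_of_dvd hv).map_tprod _ (WithPiTopology.continuous_constantCoeff ℂ)]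
  have : ∀ i, constantCoeff (v i) = 1 := by
    intro i
    have h : (X : ℂ⟦X⟧) ∣ v i - 1 := (dvd_pow_self X (Nat.succ_ne_zero i)).trans (hv i)
    rw [X_dvd_iff] at h
    simpa [sub_eq_zero] using h
  simp [this]

noncomputable def oF (i : ℕ) : ℂ⟦X⟧ := if (i + 1) % 2 = 0 then 1 else 1 - X ^ (i + 1)
noncomputable def eF (i : ℕ) : ℂ⟦X⟧ := if (i + 1) % 2 = 0 then 1 - X ^ (i + 1) else 1
noncomputable def tF (i : ℕ) : ℂ⟦X⟧ :=
  if (i + 1) % 2 = 0 then 1 - X ^ (3 * (i + 1))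
  else if (i + 1) % 3 = 0 then 1 - X ^ (i + 1) else 1

lemma oF_dvd (i : ℕ) : X ^ (i + 1) ∣ oF i - 1 := by
  unfold oF; split_ifs <;> simp
lemma eF_dvd (i : ℕ) : X ^ (i + 1) ∣ eF i - 1 := by
  unfold eF; split_ifs <;> simp
lemma tF_dvd (i : ℕ) : X ^ (i + 1) ∣ tF i - 1 := by
  unfold tF; split_ifs <;> simp
  exact pow_dvd_pow _ (by omega)

noncomputable def psi : ℂ⟦X⟧ := ∑' s : ℕ, X ^ (s * (s + 1) / 2)

lemma summable_psi : Summable (fun s : ℕ => (X : ℂ⟦X⟧) ^ (s * (s + 1) / 2)) := by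
  apply WithPiTopology.summable_of_tendsto_order_atTop_nhds_top
  refine tendsto_order fun i => pow_dvd_pow _ ?_
  rw [Nat.le_div_iff_mul_le (by norm_num)]
  rcases i with _ | i
  · simp
  · gcongr; omega

lemma tri_mod (s m : ℕ) : s * (s + 1) / 2 ≠ 3 * m + 2 := by
  intro h
  have h2 : s * (s + 1) = 2 * (s * (s + 1) / 2) :=
    (Nat.mul_div_cancel' (Nat.even_mul_succ_self s).two_dvd).symm
  rw [h] at h2
  have h3 : (s * (s + 1)) % 3 = 1 := by omega
  have : s % 3 = 0 ∨ s % 3 = 1 ∨ s % 3 = 2 := by omega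
  rcases this with h | h | h <;> simp [Nat.mul_mod, Nat.add_mod, h] at h3

lemma coeff_psi (m : ℕ) : coeff (3 * m + 2) psi = 0 := by
  unfold psi
  rw [summable_psi.map_tsum _ (WithPiTopology.continuous_coeff ℂ _)]
  simp [coeff_X_pow, (tri_mod _ m).symm]

lemma gauss : (∏' i, oF i) * psi = ∏' i, eF i := by
  have ho : HasProd (fun j : ℕ => (1 : ℂ⟦X⟧) - X ^ (2 * j + 1)) (∏' i, oF i) := by
    have h := (multipliable_of_dvd oF_dvd).hasProd
    rw [← Function.Injective.hasProd_iff (g := fun j : ℕ => 2 * j)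
      (fun a b h => by simpa using h)] at h
    · convert h using 2 with j
      simp only [Function.comp, oF]
      rw [if_neg (by omega)]
    · intro y hy
      have : (y + 1) % 2 = 0 := by
        by_contra hc
        exact hy ⟨y / 2, by simp only; omega⟩
      simp [oF, this]
  have he : HasProd (fun j : ℕ => (1 : ℂ⟦X⟧) - X ^ (2 * j + 2)) (∏' i, eF i) := by
    have h := (multipliable_of_dvd eF_dvd).hasProd
    rw [← Function.Injective.hasProd_iff (g := fun j : ℕ => 2 * j + 1)
      (fun a b h => by simpa using h)] at h
    · convert h using 2 with j
      simp only [Function.comp, eF]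
      rw [if_pos (by omega)]
    · intro y hy
      have : (y + 1) % 2 ≠ 0 := by
        intro hc
        exact hy ⟨y / 2, by simp only; omega⟩
      simp [eF, this]
  have h1 := ho.tendsto_prod_nat
  have h2 := he.tendsto_prod_nat
  have h3 := (summable_psi.hasSum.tendsto_sum_nat).comp
    (Filter.tendsto_id.const_mul_atTop' (show 0 < 2 by norm_num) : Filter.Tendsto (fun n : ℕ => 2 * n) _ _)
  have h4 := h1.mul h3
  have h5 : Filter.Tendsto (fun n : ℕ => ∑ s ∈ range n, W (X : ℂ⟦X⟧) n s
      - ∏ k ∈ range n, (1 - X ^ (2 * k + 2))) Filter.atTop (nhds 0) := by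
    rw [WithPiTopology.tendsto_iff_coeff_tendsto]
    intro d
    refine tendsto_atTop_of_eventually_const (i₀ := d + 1) (fun n hn ↦ ?_)
    have := X_pow_dvd_iff.mp (sum_W_eq (X : ℂ⟦X⟧) n (by omega)) d (by omega)
    simpa using this
  have h6 := h5.add h2
  refine tendsto_nhds_unique h4 ?_
  rw [zero_add] at h6
  refine h6.congr fun n => ?_
  simp only [sub_add_cancel, Function.comp]
  exact (shanks _ n).symm

/-! ### The cubic factor -/

def Supp3 (f : ℂ⟦X⟧) : Prop := ∀ n, n % 3 ≠ 0 → coeff n f = 0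

lemma Supp3.mul {f g : ℂ⟦X⟧} (hf : Supp3 f) (hg : Supp3 g) : Supp3 (f * g) := by
  intro n hn
  rw [coeff_mul]
  refine sum_eq_zero fun p hp => ?_
  rw [HasAntidiagonal.mem_antidiagonal] at hp
  by_cases h : p.1 % 3 = 0
  · rw [hg p.2 (by omega), mul_zero]
  · rw [hf p.1 h, zero_mul]

lemma supp3_one : Supp3 1 := by
  intro n hn
  rw [coeff_one, if_neg (by rintro rfl; simp at hn)]

lemma supp3_sub (k : ℕ) (hk : k % 3 = 0) : Supp3 (1 - X ^ k) := by
  intro n hn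
  rw [map_sub, supp3_one n hn, coeff_X_pow, if_neg (by rintro rfl; exact hn hk), sub_zero]

lemma supp3_tF (i : ℕ) : Supp3 (tF i) := by
  unfold tF
  split_ifs with h1 h2
  · exact supp3_sub _ (by omega)
  · exact supp3_sub _ h2
  · exact supp3_one

lemma supp3_prod : Supp3 (∏' i, tF i) := by
  intro n hn
  have h := (multipliable_of_dvd tF_dvd).hasProd.tendsto_prod_nat
  rw [WithPiTopology.tendsto_iff_coeff_tendsto] at h
  refine tendsto_nhds_unique (h n) ?_
  have : ∀ m, Supp3 (∏ i ∈ range m, tF i) := by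
    intro m
    induction m with
    | zero => simpa using supp3_one
    | succ m ih => rw [prod_range_succ]; exact ih.mul (supp3_tF m)
  simp only [this _ n hn]
  exact tendsto_const_nhds

lemma vanish {F G : ℂ⟦X⟧} (hG : Supp3 G) (hG0 : constantCoeff G = 1)
    (h : ∀ m, coeff (3 * m + 2) (F * G) = 0) (m : ℕ) : coeff (3 * m + 2) F = 0 := by
  induction m using Nat.strong_induction_on with
  | _ m ih =>
    have hm := h m
    rw [coeff_mul, sum_eq_single (3 * m + 2, 0)] at hm
    · simpa [hG0] using hm
    · rintro ⟨a, b⟩ hab hne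
      rw [HasAntidiagonal.mem_antidiagonal] at hab
      simp only at hab ⊢
      by_cases hb : b % 3 = 0
      · have hb0 : b ≠ 0 := by
          rintro rfl
          exact hne (by simp at hab; simp [hab])
        have : a = 3 * (m - b / 3) + 2 := by omega
        rw [this, ih _ (by omega), zero_mul]
      · rw [hG b hb, mul_zero]
    · intro hc; simp at hc

/-! ### Generating functions -/

lemma coeff_gen (h : ℕ → ℂ) (n : ℕ) :
    coeff n (Nat.Partition.genFun (fun i c => h i ^ c))
      = ∑ p : n.Partition, (p.parts.map h).prod := by
  rw [Nat.Partition.coeff_genFun]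
  refine sum_congr rfl fun p _ => ?_
  rw [prod_multiset_map_count]
  simp [Finsupp.prod]

lemma lin_dvd (h : ℕ → ℂ) (i : ℕ) : X ^ (i + 1) ∣ (1 - C (h (i + 1)) * X ^ (i + 1)) - 1 := by
  simp

lemma gen_mul (h : ℕ → ℂ) :
    Nat.Partition.genFun (fun i c => h i ^ c) * ∏' i, (1 - C (h (i + 1)) * X ^ (i + 1)) = 1 := by
  have h1 := Nat.Partition.hasProd_genFun (fun i c => h i ^ c)
  have h2 := (multipliable_of_dvd (lin_dvd h)).hasProd
  have h3 := h1.mul h2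
  refine h3.unique ?_
  convert hasProd_one with i
  have hc : constantCoeff (C (h (i + 1)) * X ^ (i + 1) : ℂ⟦X⟧) = 0 := by simp
  have hs := WithPiTopology.summable_pow_of_constantCoeff_eq_zero hc
  have hg := WithPiTopology.one_sub_mul_tsum_pow_of_constantCoeff_eq_zero hc
  rw [hs.tsum_eq_zero_add, pow_zero] at hg
  have ht : ∀ j : ℕ, (h (i + 1)) ^ (j + 1) • (X : ℂ⟦X⟧) ^ ((i + 1) * (j + 1))
      = (C (h (i + 1)) * X ^ (i + 1)) ^ (j + 1) := by
    intro j
    rw [mul_pow, ← map_pow, ← pow_mul, smul_eq_C_mul]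
  simp only [ht]
  rw [mul_comm]
  exact hg

variable (w : ℂ)

def ha (k : ℕ) : ℂ := if k % 2 = 0 then w else 1
def hb (k : ℕ) : ℂ := if k % 6 ≠ 1 ∧ k % 6 ≠ 5 then (if k % 2 = 0 then w ^ 2 else 1) else 0

lemma factor (hw : 1 + w + w ^ 2 = 0) (i : ℕ) :
    (1 - C (ha w (i + 1)) * X ^ (i + 1)) * (1 - C (hb w (i + 1)) * X ^ (i + 1)) * eF i
      = oF i * tF i := by
  have hC : (1 : ℂ⟦X⟧) + C w + C w ^ 2 = 0 := by
    rw [← map_pow, ← map_one (C (R := ℂ)), ← map_add, ← map_add, hw, map_zero]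
  unfold ha hb eF oF tF
  by_cases h2 : (i + 1) % 2 = 0
  · rw [if_pos h2, if_pos (by omega), if_pos h2, if_pos h2, if_pos h2, if_pos h2, map_pow, mul_comm 3,
      pow_mul]
    generalize (X : ℂ⟦X⟧) ^ (i + 1) = y
    linear_combination ((-y + (C w - 1) * y ^ 2) * (1 - y)) * hC
  · by_cases h3 : (i + 1) % 3 = 0
    · rw [if_neg h2, if_pos (by omega), if_neg h2, if_neg h2, if_neg h2, if_neg h2, if_pos h3]
      simp
    · rw [if_neg h2, if_neg (by omega), if_neg h2, if_neg h2, if_neg h2, if_neg h3]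
      simp

noncomputable def gA : ℂ⟦X⟧ := Nat.Partition.genFun (fun i c => ha w i ^ c)
noncomputable def gB : ℂ⟦X⟧ := Nat.Partition.genFun (fun i c => hb w i ^ c)

lemma main_gf (hw : 1 + w + w ^ 2 = 0) : gA w * gB w * ∏' i, tF i = psi := by
  have hA := gen_mul (ha w)
  have hB := gen_mul (hb w)
  have mA := multipliable_of_dvd (lin_dvd (ha w))
  have mB := multipliable_of_dvd (lin_dvd (hb w))
  have mE := multipliable_of_dvd eF_dvd
  have mO := multipliable_of_dvd oF_dvd
  have mT := multipliable_of_dvd tF_dvd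
  have key := (mA.hasProd.mul mB.hasProd).mul mE.hasProd
  simp only [factor w hw] at key
  have key2 := key.unique (mO.hasProd.mul mT.hasProd)
  rw [← gauss] at key2
  have hO : (∏' i, oF i) ≠ 0 := by
    intro h
    have := constantCoeff_tprod oF_dvd
    rw [h] at this
    simp at this
  change gA w * _ = 1 at hA
  change gB w * _ = 1 at hB
  apply mul_left_cancel₀ hO
  generalize (∏' i, (1 - C (ha w (i + 1)) * X ^ (i + 1))) = dA at *
  generalize (∏' i, (1 - C (hb w (i + 1)) * X ^ (i + 1))) = dB at *
  generalize (∏' i, tF i) = T at *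
  generalize (∏' i, oF i) = O at *
  linear_combination (-gA w * gB w) * key2 + (O * psi * gB w * dB) * hA + (O * psi) * hB

lemma coeff_zero (hw : 1 + w + w ^ 2 = 0) (n : ℕ) : coeff (3 * n + 2) (gA w * gB w) = 0 :=
  vanish supp3_prod (constantCoeff_tprod tF_dvd)
    (fun m => by rw [main_gf w hw, coeff_psi]) n

lemma prod_ha (s : Multiset ℕ) :
    (s.map (ha w)).prod = w ^ (s.filter (fun k => k % 2 = 0)).card := by
  induction s using Multiset.induction_on with
  | empty => simp
  | cons a s ih =>
    rw [Multiset.map_cons, Multiset.prod_cons, ih, Multiset.filter_cons]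
    unfold ha
    split_ifs <;> simp [pow_add, mul_comm]

lemma prod_hb (s : Multiset ℕ) :
    (s.map (hb w)).prod = if ∀ k ∈ s, k % 6 ≠ 1 ∧ k % 6 ≠ 5 then
      w ^ (2 * (s.filter (fun k => k % 2 = 0)).card) else 0 := by
  induction s using Multiset.induction_on with
  | empty => simp
  | cons a s ih =>
    rw [Multiset.map_cons, Multiset.prod_cons, ih, Multiset.filter_cons]
    simp only [Multiset.forall_mem_cons]
    unfold hb
    by_cases h1 : a % 6 ≠ 1 ∧ a % 6 ≠ 5
    · by_cases h2 : ∀ k ∈ s, k % 6 ≠ 1 ∧ k % 6 ≠ 5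
      · rw [if_pos h1, if_pos h2, if_pos (And.intro h1 h2)]
        split_ifs <;> simp [mul_add, pow_add, mul_comm]
      · rw [if_neg h2, if_neg (mt And.right h2), mul_zero]
    · rw [if_neg h1, if_neg (mt And.left h1), zero_mul]

lemma w_split (hw : w ^ 3 = 1) (a b : ℕ) :
    w ^ a * w ^ (2 * b) = (if (a : ℤ) - b ≡ ((0 : ℕ) : ℤ) [ZMOD 3] then 1 else 0)
      + (if (a : ℤ) - b ≡ ((1 : ℕ) : ℤ) [ZMOD 3] then 1 else 0) * w
      + (if (a : ℤ) - b ≡ ((2 : ℕ) : ℤ) [ZMOD 3] then 1 else 0) * w ^ 2 := by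
  have hp : w ^ a * w ^ (2 * b) = w ^ ((a + 2 * b) % 3) := by
    rw [← pow_add]
    conv_lhs => rw [← Nat.div_add_mod (a + 2 * b) 3, pow_add, pow_mul, hw, one_pow, one_mul]
  rw [hp]
  have hz : ∀ i : ℕ, i < 3 → ((a : ℤ) - b ≡ (i : ℤ) [ZMOD 3] ↔ (a + 2 * b) % 3 = i) := by
    intro i hi
    unfold Int.ModEq
    omega
  simp only [hz 0 (by norm_num), hz 1 (by norm_num), hz 2 (by norm_num)]
  have : (a + 2 * b) % 3 = 0 ∨ (a + 2 * b) % 3 = 1 ∨ (a + 2 * b) % 3 = 2 := by omega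
  rcases this with h | h | h <;> simp [h]

lemma Nd_cast (i n : ℕ) : (Nd i n : ℂ) = ∑ a ∈ range (n + 1),
    ∑ p : Nat.Partition a, ∑ q : Nat.Partition (n - a),
      (if ∀ k ∈ q.parts, k % 6 ≠ 1 ∧ k % 6 ≠ 5 then
        (if (((p.parts.filter (fun k => k % 2 = 0)).card : ℤ) -
            ((q.parts.filter (fun k => k % 2 = 0)).card : ℤ)) ≡ (i : ℤ) [ZMOD 3]
          then (1 : ℂ) else 0) else 0) := by
  unfold Nd
  rw [Nat.cast_sum]
  refine sum_congr rfl fun a _ => ?_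
  rw [card_filter, Nat.cast_sum, ← univ_product_univ, sum_product]
  refine sum_congr rfl fun p _ => sum_congr rfl fun q _ => ?_
  rw [← ite_and]
  push_cast
  rfl

lemma coeff_eq (hw : w ^ 3 = 1) (n : ℕ) :
    coeff n (gA w * gB w) = Nd 0 n + Nd 1 n * w + Nd 2 n * w ^ 2 := by
  rw [coeff_mul, Nat.sum_antidiagonal_eq_sum_range_succ_mk]
  simp only [Nd_cast, sum_mul, ← sum_add_distrib]
  refine sum_congr rfl fun a _ => ?_
  unfold gA gB
  rw [coeff_gen, coeff_gen, sum_mul_sum]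
  refine sum_congr rfl fun p _ => sum_congr rfl fun q _ => ?_
  rw [prod_ha, prod_hb]
  by_cases h : ∀ k ∈ q.parts, k % 6 ≠ 1 ∧ k % 6 ≠ 5
  · simp only [if_pos h]
    exact w_split w hw _ _
  · simp only [if_neg h]
    ring

lemma final (a b c : ℕ) (h : ∀ w : ℂ, 1 + w + w ^ 2 = 0 → (a : ℂ) + b * w + c * w ^ 2 = 0) :
    a = b ∧ b = c := by
  have h3 : (√3 : ℝ) ^ 2 = 3 := Real.sq_sqrt (by norm_num)
  have hpos : (√3 : ℝ) ≠ 0 := by positivity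
  have hw : (1 : ℂ) + ⟨-1 / 2, √3 / 2⟩ + (⟨-1 / 2, √3 / 2⟩ : ℂ) ^ 2 = 0 := by
    apply Complex.ext
    · simp [pow_two]; nlinarith
    · simp [pow_two]; ring
  have := h _ hw
  have e : ((a : ℂ) - c) + (b - c) * (⟨-1 / 2, √3 / 2⟩ : ℂ) = 0 := by
    linear_combination this - c * hw
  have him := congrArg Complex.im e
  have hre := congrArg Complex.re e
  simp at him hre
  have hbc : (b : ℝ) - c = 0 := by
    exact him
  rw [hbc] at hre
  have h1 : (b : ℝ) = c := by linarith
  have h2 : (a : ℝ) = c := by linarith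
  have h1' : b = c := by exact_mod_cast h1
  have h2' : a = c := by exact_mod_cast h2
  exact ⟨h2'.trans h1'.symm, h1'⟩

end PdRank

theorem pd_rank_equidistribution (n : ℕ) :
    Nd 0 (3 * n + 2) = Nd 1 (3 * n + 2) ∧ Nd 1 (3 * n + 2) = Nd 2 (3 * n + 2) := by
  refine PdRank.final _ _ _ fun w hw => ?_
  have hw3 : w ^ 3 = 1 := by linear_combination (w - 1) * hw
  rw [← PdRank.coeff_eq w hw3, PdRank.coeff_zero w hw]
end
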